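/- Let G be a finitely generated group that splits as a graph of groups, i.e. admits a minimal, non-elliptic action without inversions on a simplicial tree T. Suppose that every edge group E is finitely generated and undistorted in G and satisfies (∂_M E, G) = ∅. If a connected component C of the Morse boundary ∂_M G is not a singleton, then C is contained in the image of the natural injection (∂_M V, G) → ∂_M G for some vertex group V ≤ G. Furthermore, if V₁ and V₂ are stabilisers of distinct vertices of T, then the images of (∂_M V₁, G) and (∂_M V₂, G) in ∂_M G are disjoint. -/

import Mathlib

/-!
The Morse boundary is cut into clopen pieces by the edges of the tree `T`, and the theorem is
read off from this decomposition.

Fix a base vertex `p` and the orbit map `g ↦ g • p`. For an edge `{a, b}`, the crossing set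
`crossSet S T p a b` consists of the elements of `G` next to which the Cayley graph passes from
one side of the edge to the other. It is close to the stabiliser of the edge
(`crossSet_near_edgeStab`), and, the edge groups being undistorted and the crossing sets falling
into finitely many orbits, any two of its points are joined inside it by a quasi-geodesic whose
constant does not depend on the edge (`exists_crossSet_qg`). Hence the segment of a Morse geodesic
ray between two points of a crossing set is uniformly close to that set
(`segment_near_crossSet`).

A Morse ray that comes back infinitely often near a crossing set would thus stay close to an
edge group `E`, and a limiting argument in `E` would produce a point of `(∂_M E, G)`, which is empty
(`not_near_subgroup`, `leaves_crossSet`). So every Morse ray ends up on one side of each edge, and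
equivalent rays end up on the same side. The same squeezing shows that the side is locally constant
on each stratum of `N`-Morse rays (`exists_cylinder`); therefore the set of boundary points on a
given side of an edge is clopen (`isClopen_sideSet`), and a connected component lies on one
side of each edge.

Orient every edge of `T` towards the given component. If some vertex `x` has all its edges
oriented towards it, then a ray representing a point of the component is always close to the
stabiliser of `x`: whenever it is on the far side of an edge at `x`, it is between two crossings of
that edge, up to an initial segment (`near_vertex_group`). Otherwise the orientations lead from
`p` to infinity in the tree (`exists_far_edge`), and any two rays representing points of the
component cross all the edges of this path. They are then joined by quasi-geodesics of uniform
quality arbitrarily far from the origin, so the Morse property makes them uniformly close to each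
other (`rays_close`, `grayRel_of_far_edges`): the component is a singleton.

Finally, a ray close to the stabilisers of two distinct vertices is close to their intersection
(`near_inf`), which fixes an edge (`stabilizer_inf_le`); this is again excluded by
`not_near_subgroup`.
-/

open Set Filter Topology
open scoped ENNReal

namespace MorseGoG

/-! ## Metric notions relative to an explicit distance function

Throughout, distances are given by an explicit function `d : X → X → ℝ`, so that the same
notions apply to metric spaces (`d = dist`), to groups with word metrics, and to subgroups
with their own word metrics. -/

variable {X : Type*}

/-- `γ` is a `C`-quasi-geodesic on the parameter set `I ⊆ ℝ` with respect to `d`: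
`C ≥ 1` and `|s−t|/C − C ≤ d (γ s) (γ t) ≤ C|s−t| + C` for all `s, t ∈ I`. -/
def IsQG (d : X → X → ℝ) (C : ℝ) (I : Set ℝ) (γ : ℝ → X) : Prop :=
  1 ≤ C ∧ ∀ s ∈ I, ∀ t ∈ I,
    |s - t| / C - C ≤ d (γ s) (γ t) ∧ d (γ s) (γ t) ≤ C * |s - t| + C

/-- `x` lies in the (closed) `r`-neighbourhood of `A` with respect to `d`. -/
def InNbhd (d : X → X → ℝ) (A : Set X) (r : ℝ) (x : X) : Prop :=
  ∃ a ∈ A, d x a ≤ r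

/-- The set `A` (e.g. the image of a quasi-geodesic) is `N`-Morse with respect to `d`:
every `C`-quasi-geodesic segment with endpoints on `A` is contained in the
`N C`-neighbourhood of `A`. -/
def MorseSet (d : X → X → ℝ) (N : ℝ → ℝ) (A : Set X) : Prop :=
  ∀ C : ℝ, 1 ≤ C → ∀ a b : ℝ, a ≤ b → ∀ α : ℝ → X,
    IsQG d C (Set.Icc a b) α → α a ∈ A → α b ∈ A →
    ∀ t ∈ Set.Icc a b, InNbhd d A (N C) (α t)

/-- `A` is Morse: it is `N`-Morse for some Morse gauge `N`. -/
def IsMorse (d : X → X → ℝ) (A : Set X) : Prop := ∃ N : ℝ → ℝ, MorseSet d N A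

/-- A discrete geodesic ray: the sequence of vertices of a geodesic ray in a graph. -/
def IsGeodSeq (d : X → X → ℝ) (γ : ℕ → X) : Prop :=
  ∀ m n : ℕ, d (γ m) (γ n) = |(m : ℝ) - (n : ℝ)|

/-- A discrete geodesic segment of length `n`. -/
def IsGeodSeg (d : X → X → ℝ) (n : ℕ) (γ : ℕ → X) : Prop :=
  ∀ i ≤ n, ∀ j ≤ n, d (γ i) (γ j) = |(i : ℝ) - (j : ℝ)|

/-- A discrete `C`-quasi-geodesic ray. -/
def IsQGSeq (d : X → X → ℝ) (C : ℝ) (γ : ℕ → X) : Prop :=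
  1 ≤ C ∧ ∀ m n : ℕ,
    |(m : ℝ) - n| / C - C ≤ d (γ m) (γ n) ∧ d (γ m) (γ n) ≤ C * |(m : ℝ) - n| + C

/-- Two sets are at finite Hausdorff distance with respect to `d`. -/
def BddHD (d : X → X → ℝ) (A B : Set X) : Prop :=
  ∃ r : ℝ, (∀ a ∈ A, InNbhd d B r a) ∧ (∀ b ∈ B, InNbhd d A r b)

/-- A discrete edge path with `n` steps: consecutive points are at distance at most `1`
(i.e. equal or joined by an edge, in a graph whose vertex set carries the metric `d`). -/
def IsEdgePath (d : X → X → ℝ) (n : ℕ) (c : ℕ → X) : Prop :=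
  ∀ i < n, d (c i) (c (i + 1)) ≤ 1

/-- Combinatorial divergence of a discrete ray `γ` in a graph with vertex distance `d`:
the infimum, over `s ≥ r` and over edge paths joining `γ (s - r)` to `γ (s + r)` and
avoiding the ball of radius `ε·r` around `γ s`, of the length of the path. -/
noncomputable def gdivergence (d : X → X → ℝ) (γ : ℕ → X) (r : ℕ) (ε : ℝ) : ℝ≥0∞ :=
  ⨅ (s : ℕ) (_ : r ≤ s) (n : ℕ) (c : ℕ → X) (_ : IsEdgePath d n c)
    (_ : c 0 = γ (s - r)) (_ : c n = γ (s + r))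
    (_ : ∀ i ≤ n, ε * r < d (c i) (γ s)), (n : ℝ≥0∞)

/-! ## Geodesic metric spaces, geodesic rays, divergence -/

variable {Y : Type*} [MetricSpace Y]

/-- A geodesic metric space: any two points are joined by an isometrically parametrised path. -/
def IsGeodesicSpace (Y : Type*) [MetricSpace Y] : Prop :=
  ∀ x y : Y, ∃ γ : ℝ → Y, γ 0 = x ∧ γ (dist x y) = y ∧
    ∀ s ∈ Set.Icc 0 (dist x y), ∀ t ∈ Set.Icc 0 (dist x y), dist (γ s) (γ t) = |s - t|

/-- A geodesic ray (defined on `[0,∞)` and extended constantly to negative times). -/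
def IsGeodRay (γ : ℝ → Y) : Prop :=
  (∀ s t : ℝ, 0 ≤ s → 0 ≤ t → dist (γ s) (γ t) = |s - t|) ∧ ∀ t : ℝ, γ t = γ (max t 0)

theorem IsGeodRay.lipschitz {γ : ℝ → Y} (h : IsGeodRay γ) : LipschitzWith 1 γ := by
  apply LipschitzWith.of_dist_le_mul
  intro s t
  rw [h.2 s, h.2 t, h.1 _ _ (le_max_right s 0) (le_max_right t 0)]
  rw [NNReal.coe_one, one_mul, Real.dist_eq]
  exact abs_max_sub_max_le_abs s t 0

/-- Divergence function `δ_γ(r, ε)` of a quasi-geodesic ray `γ` in a metric space: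
the infimum of lengths (total variations) of paths connecting `γ (s - r)` to `γ (s + r)`
outside the closed ball `B(γ s, εr)`, over all `s ≥ r`. -/
noncomputable def divergence (γ : ℝ → Y) (r ε : ℝ) : ℝ≥0∞ :=
  ⨅ (s : ℝ) (_ : r ≤ s) (c : ℝ → Y) (_ : ContinuousOn c (Set.Icc 0 1))
    (_ : c 0 = γ (s - r)) (_ : c 1 = γ (s + r))
    (_ : ∀ t ∈ Set.Icc (0 : ℝ) 1, ε * r < dist (c t) (γ s)),
    eVariationOn c (Set.Icc 0 1)

/-- Quasi-isometric embedding between sets carrying explicit distance functions. -/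
def IsQIEmb {Z W : Type*} (dZ : Z → Z → ℝ) (dW : W → W → ℝ) (f : Z → W) : Prop :=
  ∃ C : ℝ, 1 ≤ C ∧ ∀ z z' : Z,
    dZ z z' / C - C ≤ dW (f z) (f z') ∧ dW (f z) (f z') ≤ C * dZ z z' + C

/-! ## The Morse boundary of a proper geodesic metric space -/

/-- A Morse geodesic ray based at `p` in the metric space `Y`. -/
structure MRay (Y : Type*) [MetricSpace Y] (p : Y) where
  ray : ℝ → Y
  base : ray 0 = p
  geod : IsGeodRay ray
  morse : IsMorse dist (Set.range ray)

/-- Two rays are identified when they are at finite Hausdorff distance. -/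
def mrayRel (p : Y) (x y : MRay Y p) : Prop :=
  BddHD dist (Set.range x.ray) (Set.range y.ray)

/-- The Morse boundary of a metric space, as a set: Morse geodesic rays based at `p`,
modulo finite Hausdorff distance. -/
def MorseBoundarySp (Y : Type*) [MetricSpace Y] (p : Y) : Type _ := Quot (mrayRel p)

/-- The `N`-Morse stratum: `N`-Morse geodesic rays based at `p`. -/
def NRaysSp (Y : Type*) [MetricSpace Y] (p : Y) (N : ℝ → ℝ) : Type _ :=
  {γ : MRay Y p // MorseSet dist N (Set.range γ.ray)}

/-- Each stratum of rays carries the compact-open topology (as a set of continuous maps). -/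
noncomputable instance NRaysSp.instTop (p : Y) (N : ℝ → ℝ) : TopologicalSpace (NRaysSp Y p N) :=
  TopologicalSpace.induced
    (fun γ => (⟨γ.1.ray, γ.1.geod.lipschitz.continuous⟩ : C(ℝ, Y))) inferInstance

/-- The Morse boundary carries the direct limit topology over all Morse gauges:
a set is open iff its intersection with each stratum `∂_M^N Y_p` is open there. -/
noncomputable instance MorseBoundarySp.instTop (p : Y) :
    TopologicalSpace (MorseBoundarySp Y p) :=
  ⨆ N : ℝ → ℝ,
    TopologicalSpace.coinduced (fun γ : NRaysSp Y p N => Quot.mk (mrayRel p) γ.1) inferInstance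

/-- The relative Morse boundary `(∂_M Y, f)` of a quasi-isometric embedding `f : Y → X`:
classes of Morse rays of `Y` whose image under `f` is Morse in `X`.  It is a subset of
`∂_M Y` (and carries the subspace topology). -/
def relBoundarySp {Y X : Type*} [MetricSpace Y] [MetricSpace X] (p : Y) (f : Y → X) :
    Set (MorseBoundarySp Y p) :=
  {ξ | ∃ γ : MRay Y p, Quot.mk (mrayRel p) γ = ξ ∧ IsMorse dist (f '' Set.range γ.ray)}

/-! ## Word metrics and Morse boundaries of finitely generated groups -/

variable {G : Type*} [Group G]

/-- Word length of `g` with respect to the (symmetrised) alphabet `S`. -/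
noncomputable def wordLength (S : Set G) (g : G) : ℕ :=
  sInf {n : ℕ | ∃ l : List G, l.length = n ∧ (∀ x ∈ l, x ∈ S ∨ x⁻¹ ∈ S) ∧ l.prod = g}

/-- Word metric on `G` with respect to `S`; this is the distance between vertices in the
Cayley graph `Cay(G, S)`. -/
noncomputable def wdist (S : Set G) (g h : G) : ℝ := wordLength S (g⁻¹ * h)

/-- A Morse geodesic ray in the Cayley graph of `(G, S)`, based at the identity,
recorded by its sequence of vertices. -/
structure GRay (G : Type*) [Group G] (S : Set G) where
  seq : ℕ → G
  base : seq 0 = 1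
  geod : IsGeodSeq (wdist S) seq
  morse : IsMorse (wdist S) (Set.range seq)

/-- Identification of rays at finite Hausdorff distance. -/
def grayRel (S : Set G) (x y : GRay G S) : Prop :=
  BddHD (wdist S) (Set.range x.seq) (Set.range y.seq)

/-- The Morse boundary `∂_M G` of the group `G` with finite generating set `S`. -/
def MorseBoundary (G : Type*) [Group G] (S : Set G) : Type _ := Quot (grayRel (G := G) S)

/-- The stratum of `N`-Morse rays. -/
def NGRays (G : Type*) [Group G] (S : Set G) (N : ℝ → ℝ) : Type _ :=
  {γ : GRay G S // MorseSet (wdist S) N (Set.range γ.seq)}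

/-- The compact-open topology on a stratum: for rays in a graph (vertex sequences) this is
the topology of pointwise convergence of the vertex sequences, `G` being discrete. -/
noncomputable instance NGRays.instTop (S : Set G) (N : ℝ → ℝ) :
    TopologicalSpace (NGRays G S N) :=
  TopologicalSpace.induced (fun γ => γ.1.seq)
    (@Pi.topologicalSpace ℕ (fun _ => G) (fun _ => ⊥))

/-- The direct limit topology on the Morse boundary of a group. -/
noncomputable instance MorseBoundary.instTop (S : Set G) :
    TopologicalSpace (MorseBoundary G S) :=
  ⨆ N : ℝ → ℝ,
    TopologicalSpace.coinduced (fun γ : NGRays G S N => Quot.mk (grayRel S) γ.1) inferInstance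

/-! ## Subgroups: undistortion, relative Morse boundaries -/

/-- `H` is finitely generated and undistorted in `(G, S)`: it has a finite generating set
whose word metric is bi-Lipschitz equivalent (suitably, quasi-isometric) to the metric
induced from `G`. -/
def FGUndistorted (S : Set G) (H : Subgroup G) : Prop :=
  ∃ T : Finset H, Subgroup.closure (T : Set H) = ⊤ ∧
    ∃ C : ℝ, 1 ≤ C ∧ ∀ h h' : H,
      wdist (T : Set H) h h' ≤ C * wdist S (h : G) (h' : G) + C ∧
      wdist S (h : G) (h' : G) ≤ C * wdist (T : Set H) h h' + C

/-- The relative Morse boundary of `H` in `G` is empty, `(∂_M H, G) = ∅`: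
no Morse geodesic ray of `H` (w.r.t. any finite generating set of `H`) remains Morse in `G`. -/
def RelMorseEmpty (S : Set G) (H : Subgroup G) : Prop :=
  ∀ T : Finset H, Subgroup.closure (T : Set H) = ⊤ →
    ∀ γ : ℕ → H, IsGeodSeq (wdist (T : Set H)) γ →
      IsMorse (wdist (T : Set H)) (Set.range γ) →
      ¬ IsMorse (wdist S) (Set.range fun n => (γ n : G))

/-- The image of the natural injection `(∂_M H, G) ↪ ∂_M G`: those classes in `∂_M G`
having a representative ray staying at bounded distance from `H`. -/
def relBdryImage (S : Set G) (H : Subgroup G) : Set (MorseBoundary G S) :=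
  {ξ | ∃ γ : GRay G S, Quot.mk (grayRel S) γ = ξ ∧
        ∃ r : ℝ, ∀ n : ℕ, ∃ h ∈ H, wdist S (γ.seq n) h ≤ r}

/-- The relative Morse boundary `(∂_M H, G)` as a subset of `∂_M H` (where `∂_M H` is
formed w.r.t. a generating set `T` of `H`): classes of rays that remain Morse in `G`. -/
def relBdryIn (S : Set G) (H : Subgroup G) (T : Set H) : Set (MorseBoundary H T) :=
  {ξ | ∃ γ : GRay H T, Quot.mk (grayRel T) γ = ξ ∧
        IsMorse (wdist S) (Set.range fun n => (γ.seq n : G))}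

/-- Specification of the natural map `∂_M H → ∂_M G` (or of its restriction to the relative
boundary): each class is sent to the class of a ray of `G` at finite Hausdorff distance
from the image of (a representative of) the given class. -/
def InclSpec (S : Set G) (H : Subgroup G) (TH : Set H)
    (F : MorseBoundary H TH → MorseBoundary G S) : Prop :=
  ∀ γ : GRay H TH, ∀ β : GRay G S,
    Quot.mk (grayRel S) β = F (Quot.mk (grayRel TH) γ) →
    BddHD (wdist S) (Set.range fun n => ((γ.seq n : G))) (Set.range β.seq)

/-! ## Asymptotic cones and relatively wide subgroups -/

/-- Admissible sequences for an asymptotic cone: sequences at bounded rescaled distance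
from the basepoints `o`. -/
def conePts (ω : Ultrafilter ℕ) (d : X → X → ℝ) (o : ℕ → X) (s : ℕ → ℝ) : Set (ℕ → X) :=
  {x | ∃ B : ℝ, ∀ᶠ n in (ω : Filter ℕ), d (o n) (x n) ≤ B * s n}

/-- The pseudo-distance of the asymptotic cone: ultralimit of the rescaled distances. -/
noncomputable def coneDist (ω : Ultrafilter ℕ) (d : X → X → ℝ) (s : ℕ → ℝ)
    (x y : ℕ → X) : ℝ :=
  limUnder (ω : Filter ℕ) (fun n => d (x n) (y n) / s n)

/-- The topology of the asymptotic cone, as a topology on representative sequences: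
generated by the open balls of the cone pseudo-distance. -/
noncomputable def coneTop (ω : Ultrafilter ℕ) (d : X → X → ℝ) (o : ℕ → X) (s : ℕ → ℝ) :
    TopologicalSpace (ℕ → X) :=
  TopologicalSpace.generateFrom
    {U | ∃ c ∈ conePts ω d o s, ∃ ε : ℝ, 0 < ε ∧ U = {x | coneDist ω d s c x < ε}}

/-- `z` is a cut point of the asymptotic cone separating the points `x` and `y`:
`x, y` differ from `z` and do not lie in a common connected subset of the complement
of (the point represented by) `z`. -/
def ConeSeparates (ω : Ultrafilter ℕ) (d : X → X → ℝ) (o : ℕ → X) (s : ℕ → ℝ)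
    (x y z : ℕ → X) : Prop :=
  coneDist ω d s x z ≠ 0 ∧ coneDist ω d s y z ≠ 0 ∧
  ¬ ∃ A : Set (ℕ → X),
      A ⊆ {w ∈ conePts ω d o s | coneDist ω d s w z ≠ 0} ∧ x ∈ A ∧ y ∈ A ∧
      @IsPreconnected (ℕ → X) (coneTop ω d o s) A

/-- `H` is relatively wide in `(G, S)`: in every asymptotic cone of `G` (over a
non-principal ultrafilter, arbitrary basepoints and scaling factors tending to infinity),
no two limit points of `H` are separated by a cut point. -/
def RelativelyWide (S : Set G) (H : Subgroup G) : Prop :=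
  ∀ ω : Ultrafilter ℕ, (ω : Filter ℕ) ≤ Filter.cofinite →
  ∀ (o : ℕ → G) (s : ℕ → ℝ), (∀ n, 0 < s n) → Tendsto s atTop atTop →
  ∀ x y z : ℕ → G, (∀ n, x n ∈ H) → (∀ n, y n ∈ H) →
    x ∈ conePts ω (wdist S) o s → y ∈ conePts ω (wdist S) o s →
    z ∈ conePts ω (wdist S) o s →
    ¬ ConeSeparates ω (wdist S) o s x y z

/-- The subgroup `H ≤ V` is relatively wide in `V` (for any, equivalently some, finite
generating set of `V`). -/
def RelWideIn (V H : Subgroup G) : Prop :=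
  ∀ SV : Finset V, Subgroup.closure (SV : Set V) = ⊤ →
    RelativelyWide (SV : Set V) (H.subgroupOf V)

/-! ## Actions on simplicial trees -/

variable {VT : Type*}

/-- `G` splits as a graph of groups: it acts on the simplicial tree `T`
(preserving adjacency), minimally, non-elliptically and without inversions. -/
def ActsOnTree (G : Type*) [Group G] {VT : Type*} (T : SimpleGraph VT) [MulAction G VT] :
    Prop :=
  T.IsTree ∧
  (∀ (g : G) (a b : VT), T.Adj a b → T.Adj (g • a) (g • b)) ∧
  (∀ (g : G) (a b : VT), T.Adj a b → ¬(g • a = b ∧ g • b = a)) ∧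
  (¬ ∃ v : VT, ∀ g : G, g • v = v) ∧
  (∀ W : Set VT, W.Nonempty → (∀ (g : G), ∀ v ∈ W, g • v ∈ W) →
    (∀ a ∈ W, ∀ b ∈ W, ∀ c : VT, T.dist a c + T.dist c b = T.dist a b → c ∈ W) →
    W = Set.univ)

/-- The stabiliser of the edge `{a, b}` (pointwise; for actions without inversions this is
the full edge stabiliser). -/
def edgeStab (G : Type*) [Group G] {VT : Type*} [MulAction G VT] (a b : VT) : Subgroup G :=
  MulAction.stabilizer G a ⊓ MulAction.stabilizer G b

/-- The halfspace determined by the edge `{a, b}` containing `b`: one of the two connected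
components of the complement of the open edge. -/
def halfspace {VT : Type*} (T : SimpleGraph VT) (a b : VT) : Set VT :=
  {v | T.dist v b < T.dist v a}

end MorseGoG

namespace MorseGoG

variable {G : Type*} [Group G] {VT : Type*}

/-- A choice of "edge subgraphs" `Γ(𝔢) ⊆ Γ` of the Cayley graph `Γ = Cay(G, S)`, one for
each (unoriented) edge of the tree `T`, recorded by its vertex set `A a b ⊆ G`,
satisfying the properties of Lemma 3.2 (`AIS lem`).  Here `p` is the fixed base vertex of
`T` and `f_p(g) = g • p` is the orbit map. -/
structure EdgeSubgraphs (G : Type*) [Group G] (S : Set G) {VT : Type*} (T : SimpleGraph VT)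
    [MulAction G VT] (p : VT) where
  /-- the vertex set of `Γ(𝔢)` for the edge `𝔢 = {a, b}` -/
  A : VT → VT → Set G
  /-- `Γ(𝔢)` only depends on the unoriented edge -/
  symm : ∀ a b : VT, A a b = A b a
  /-- (1) `Γ(𝔢)` is connected -/
  conn : ∀ a b : VT, T.Adj a b → ∀ x ∈ A a b, ∀ y ∈ A a b,
    ∃ (n : ℕ) (c : ℕ → G), IsEdgePath (wdist S) n c ∧ c 0 = x ∧ c n = y ∧
      ∀ i ≤ n, c i ∈ A a b
  /-- (1) `Γ(𝔢)` is `G_𝔢`-invariant -/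
  inva : ∀ a b : VT, T.Adj a b → ∀ g ∈ edgeStab G a b, ∀ x ∈ A a b, g * x ∈ A a b
  /-- (1) `Γ(𝔢)` is `G_𝔢`-cocompact -/
  cocpt : ∀ a b : VT, T.Adj a b →
    ∃ F : Finset G, ∀ x ∈ A a b, ∃ g ∈ edgeStab G a b, ∃ f ∈ F, x = g * f
  /-- (2) equivariance: `Γ(g𝔢) = gΓ(𝔢)` -/
  equivariant : ∀ (g : G) (a b : VT), A (g • a) (g • b) = (fun x => g * x) '' A a b
  /-- (3) `Γ(𝔢)` contains every edge of `Γ` with one endpoint in `f_p⁻¹(𝔥)` and the other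
  in `f_p⁻¹(𝔥*)` -/
  crossing : ∀ a b : VT, T.Adj a b → ∀ x y : G, wdist S x y = 1 →
    x • p ∈ halfspace T a b → y • p ∈ halfspace T b a → x ∈ A a b ∧ y ∈ A a b
  /-- (4) `N(f_p⁻¹(𝔥), r) ∩ N(f_p⁻¹(𝔥*), r) ⊆ N(Γ(𝔢), r)` -/
  nbhd : ∀ a b : VT, T.Adj a b → ∀ r : ℝ, 0 ≤ r → ∀ x : G,
    (∃ y : G, y • p ∈ halfspace T a b ∧ wdist S x y ≤ r) →
    (∃ y : G, y • p ∈ halfspace T b a ∧ wdist S x y ≤ r) →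
    ∃ z ∈ A a b, wdist S x z ≤ r
  /-- (5) each edge of `Γ` lies in `Γ(𝔢)` for only finitely many edges `𝔢` of `T` -/
  finmany : ∀ x y : G, wdist S x y = 1 →
    {e : VT × VT | T.Adj e.1 e.2 ∧ x ∈ A e.1 e.2 ∧ y ∈ A e.1 e.2}.Finite

/-- The vertex set of `Γ(𝔥)` for the halfspace `𝔥` of the edge `{a,b}` containing `b`:
`f_p⁻¹(𝔥) ∖ Γ(𝔢)`. -/
def hsVerts (T : SimpleGraph VT) [MulAction G VT] (p : VT)
    (A : VT → VT → Set G) (a b : VT) : Set G :=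
  {g : G | g • p ∈ halfspace T a b ∧ g ∉ A a b}

/-- `M(𝔥) ⊆ ∂_M G`: classes of rays eventually contained in `Γ(𝔥)`, for the halfspace `𝔥`
of the edge `{a,b}` containing `b`. -/
def Mset (S : Set G) (T : SimpleGraph VT) [MulAction G VT] (p : VT)
    (A : VT → VT → Set G) (a b : VT) : Set (MorseBoundary G S) :=
  {ξ | ∃ γ : GRay G S, Quot.mk (grayRel S) γ = ξ ∧
        ∃ n₀ : ℕ, ∀ n ≥ n₀, γ.seq n ∈ hsVerts T p A a b}

end MorseGoG

namespace MorseGoG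

/-! ### Word metrics -/

section Word

variable {G : Type*} [Group G] {S : Set G}

theorem wordLength_prod_le (l : List G) (hl : ∀ x ∈ l, x ∈ S ∨ x⁻¹ ∈ S) :
    wordLength S l.prod ≤ l.length :=
  Nat.sInf_le ⟨l, rfl, hl, rfl⟩

theorem exists_word (hS : Subgroup.closure S = ⊤) (g : G) :
    ∃ l : List G, l.length = wordLength S g ∧ (∀ x ∈ l, x ∈ S ∨ x⁻¹ ∈ S) ∧ l.prod = g := by
  refine Nat.sInf_mem (s := {n : ℕ | ∃ l : List G, l.length = n ∧
    (∀ x ∈ l, x ∈ S ∨ x⁻¹ ∈ S) ∧ l.prod = g}) ?_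
  have hg : g ∈ (Subgroup.closure S).toSubmonoid := by rw [hS]; trivial
  rw [Subgroup.closure_toSubmonoid] at hg
  obtain ⟨l, hl, rfl⟩ := Submonoid.exists_list_of_mem_closure hg
  exact ⟨l.length, l, rfl, fun x hx => by simpa using hl x hx, rfl⟩

theorem wordLength_one : wordLength S (1 : G) = 0 := by
  simpa using wordLength_prod_le (S := S) ([] : List G) (by simp)

theorem wordLength_eq_zero (hS : Subgroup.closure S = ⊤) {g : G} (h : wordLength S g = 0) :
    g = 1 := by
  obtain ⟨l, h1, -, h3⟩ := exists_word hS g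
  rw [h, List.length_eq_zero_iff] at h1
  simpa [h1] using h3.symm

theorem wordLength_mul_le (hS : Subgroup.closure S = ⊤) (g h : G) :
    wordLength S (g * h) ≤ wordLength S g + wordLength S h := by
  obtain ⟨l, h1, h2, h3⟩ := exists_word hS g
  obtain ⟨m, k1, k2, k3⟩ := exists_word hS h
  rw [← h1, ← k1, ← h3, ← k3, ← List.prod_append, ← List.length_append]
  apply wordLength_prod_le
  intro x hx
  rcases List.mem_append.1 hx with hx | hx
  exacts [h2 x hx, k2 x hx]

theorem wordLength_inv_le (hS : Subgroup.closure S = ⊤) (g : G) :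
    wordLength S g⁻¹ ≤ wordLength S g := by
  obtain ⟨l, h1, h2, h3⟩ := exists_word hS g
  rw [← h1, ← h3, List.prod_inv_reverse]
  refine (wordLength_prod_le _ ?_).trans (by simp)
  intro x hx
  simp only [List.mem_reverse, List.mem_map] at hx
  obtain ⟨y, hy, rfl⟩ := hx
  rw [inv_inv]
  exact (h2 y hy).symm

theorem wordLength_inv (hS : Subgroup.closure S = ⊤) (g : G) :
    wordLength S g⁻¹ = wordLength S g :=
  le_antisymm (wordLength_inv_le hS g) (by simpa using wordLength_inv_le hS g⁻¹)

theorem wdist_nonneg (g h : G) : 0 ≤ wdist S g h := Nat.cast_nonneg _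

theorem wdist_self (g : G) : wdist S g g = 0 := by simp [wdist, wordLength_one]

theorem wdist_comm (hS : Subgroup.closure S = ⊤) (g h : G) : wdist S g h = wdist S h g := by
  unfold wdist
  rw [← wordLength_inv hS, mul_inv_rev, inv_inv]

theorem wdist_triangle (hS : Subgroup.closure S = ⊤) (g h k : G) :
    wdist S g k ≤ wdist S g h + wdist S h k := by
  have := wordLength_mul_le hS (g⁻¹ * h) (h⁻¹ * k)
  rw [show g⁻¹ * h * (h⁻¹ * k) = g⁻¹ * k by group] at this
  unfold wdist
  exact_mod_cast this

theorem wdist_mul_left (g h k : G) : wdist S (g * h) (g * k) = wdist S h k := by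
  unfold wdist
  rw [show (g * h)⁻¹ * (g * k) = h⁻¹ * k by group]

theorem wdist_mul_right (g h : G) : wdist S g (g * h) = wordLength S h := by
  simp [wdist]

theorem finite_ball (hS : Subgroup.closure S = ⊤) (hf : S.Finite) (n : ℕ) :
    {g : G | wordLength S g ≤ n}.Finite := by
  have key : ∀ n : ℕ, {g : G | ∃ l : List G, l.length ≤ n ∧ (∀ x ∈ l, x ∈ S ∨ x⁻¹ ∈ S) ∧
      l.prod = g}.Finite := by
    intro n
    induction n with
    | zero =>
      refine (Set.finite_singleton (1 : G)).subset ?_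
      rintro g ⟨l, h1, -, rfl⟩
      have : l = [] := List.length_eq_zero_iff.1 (Nat.le_zero.1 h1)
      simp [this]
    | succ n ih =>
      refine ((Set.finite_singleton (1 : G)).union
        (Set.Finite.image2 (· * ·) (hf.union hf.inv) ih)).subset ?_
      rintro g ⟨l, h1, h2, rfl⟩
      cases l with
      | nil => left; simp
      | cons x l =>
        right
        refine ⟨x, by simpa using h2 x (by simp), l.prod, ⟨l, by simpa using h1,
          fun y hy => h2 y (by simp [hy]), rfl⟩, by simp⟩
  refine (key n).subset ?_
  intro g hg
  obtain ⟨l, h1, h2, h3⟩ := exists_word hS g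
  exact ⟨l, h1.le.trans hg, h2, h3⟩

/-- The Cayley graph is geodesic: prefixes of a shortest word give a geodesic segment. -/
theorem exists_geodesic (hS : Subgroup.closure S = ⊤) (g h : G) :
    ∃ β : ℕ → G, β 0 = g ∧ β (wordLength S (g⁻¹ * h)) = h ∧
      IsGeodSeg (wdist S) (wordLength S (g⁻¹ * h)) β := by
  obtain ⟨l, h1, h2, h3⟩ := exists_word hS (g⁻¹ * h)
  set n := wordLength S (g⁻¹ * h) with hn
  set β : ℕ → G := fun i => g * (l.take i).prod with hβ
  have b0 : β 0 = g := by simp [hβ]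
  have bn : β n = h := by simp [hβ, ← h1, h3]
  have up : ∀ i j, i ≤ j → j ≤ n → wdist S (β i) (β j) ≤ (j : ℝ) - i := by
    intro i j hij hj
    have e : (l.take i).prod * ((l.take j).drop i).prod = (l.take j).prod := by
      rw [← List.prod_append]
      congr 1
      have := List.take_append_drop i (l.take j)
      rwa [List.take_take, min_eq_left hij] at this
    simp only [hβ]
    rw [wdist_mul_left, ← e, wdist_mul_right]
    have := wordLength_prod_le (S := S) ((l.take j).drop i)
      (fun x hx => h2 x (List.mem_of_mem_take (List.mem_of_mem_drop hx)))
    have h4 : ((l.take j).drop i).length = j - i := by simp; omega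
    rw [h4] at this
    rw [← Nat.cast_sub hij]
    exact_mod_cast this
  have eq : ∀ i j, i ≤ j → j ≤ n → wdist S (β i) (β j) = (j : ℝ) - i := by
    intro i j hij hj
    refine le_antisymm (up i j hij hj) ?_
    have t1 := wdist_triangle hS (β 0) (β i) (β n)
    have t2 := wdist_triangle hS (β i) (β j) (β n)
    have u1 := up 0 i (Nat.zero_le _) (hij.trans hj)
    have u2 := up j n hj le_rfl
    have : wdist S (β 0) (β n) = n := by rw [b0, bn]; rfl
    push_cast at u1
    linarith
  refine ⟨β, b0, bn, fun i hi j hj => ?_⟩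
  rcases le_total i j with hij | hij
  · have : (i : ℝ) ≤ j := by exact_mod_cast hij
    rw [eq i j hij hj, abs_of_nonpos (by linarith)]; ring
  · have : (j : ℝ) ≤ i := by exact_mod_cast hij
    rw [wdist_comm hS, eq j i hij hi, abs_of_nonneg (by linarith)]

end Word

/-! ### Quasi-geodesics and the Morse property -/

section QG

theorem IsQG.mono {X : Type*} {d : X → X → ℝ} {C C' : ℝ} {I : Set ℝ} {α : ℝ → X}
    (h : IsQG d C I α) (hC : C ≤ C') : IsQG d C' I α := by
  have h1 := h.1
  refine ⟨h1.trans hC, fun s hs t ht => ?_⟩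
  obtain ⟨a, b⟩ := h.2 s hs t ht
  have h2 : |s - t| / C' ≤ |s - t| / C :=
    div_le_div_of_nonneg_left (abs_nonneg _) (by linarith) hC
  have h3 : C * |s - t| ≤ C' * |s - t| := mul_le_mul_of_nonneg_right hC (abs_nonneg _)
  constructor <;> linarith

theorem IsQG.subset {X : Type*} {d : X → X → ℝ} {C : ℝ} {I J : Set ℝ} {α : ℝ → X}
    (h : IsQG d C I α) (hJ : J ⊆ I) : IsQG d C J α :=
  ⟨h.1, fun s hs t ht => h.2 s (hJ hs) t (hJ ht)⟩

theorem IsQG.reverse {X : Type*} {d : X → X → ℝ} {C a b : ℝ} {α : ℝ → X}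
    (h : IsQG d C (Icc a b) α) : IsQG d C (Icc (-b) (-a)) (fun t => α (-t)) := by
  refine ⟨h.1, fun s hs t ht => ?_⟩
  have := h.2 (-s) ⟨by linarith [hs.2], by linarith [hs.1]⟩ (-t)
    ⟨by linarith [ht.2], by linarith [ht.1]⟩
  rwa [show -s - -t = -(s - t) by ring, abs_neg] at this

theorem MorseSet.mono {X : Type*} {d : X → X → ℝ} {N N' : ℝ → ℝ} {A : Set X}
    (h : MorseSet d N A) (hN : ∀ C, N C ≤ N' C) : MorseSet d N' A := by
  intro C hC a b hab α hα h1 h2 t ht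
  obtain ⟨x, hx, hd⟩ := h C hC a b hab α hα h1 h2 t ht
  exact ⟨x, hx, hd.trans (hN C)⟩

variable {G : Type*} [Group G] {S : Set G}

theorem IsQG.translate {C : ℝ} {I : Set ℝ} {α : ℝ → G} (h : IsQG (wdist S) C I α) (g : G) :
    IsQG (wdist S) C I (fun t => g * α t) := by
  refine ⟨h.1, fun s hs t ht => ?_⟩
  simpa only [wdist_mul_left] using h.2 s hs t ht

/-- A quasi-geodesic segment may be prolonged by one unit of time at either end so as to end
at any prescribed points close to its endpoints. -/
theorem IsQG.exists_extend (hS : Subgroup.closure S = ⊤) {C r a b : ℝ} {α : ℝ → G}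
    (hα : IsQG (wdist S) C (Icc a b) α) (hab : a ≤ b) {x y : G}
    (hx : wdist S (α a) x ≤ r) (hy : wdist S (α b) y ≤ r) :
    ∃ α' : ℝ → G, IsQG (wdist S) (C + 2 * r + 2) (Icc (a - 1) (b + 1)) α' ∧
      α' (a - 1) = x ∧ α' (b + 1) = y ∧ (∀ t ∈ Icc a b, α' t = α t) ∧
      ∀ t ∈ Icc (a - 1) (b + 1), α' t = x ∨ α' t = y ∨ ∃ s ∈ Icc a b, α' t = α s := by
  have hr : 0 ≤ r := (wdist_nonneg _ _).trans hx
  have hC := hα.1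
  set α' : ℝ → G := fun t => if t < a then x else if b < t then y else α t with hα'
  have hin : ∀ t ∈ Icc a b, α' t = α t := by
    intro t ht
    simp [hα', not_lt.2 ht.1, not_lt.2 ht.2]
  -- `φ t` is the point of `[a, b]` nearest to `t`
  set φ : ℝ → ℝ := fun t => max a (min b t) with hφ
  have φmem : ∀ t, φ t ∈ Icc a b := fun t =>
    ⟨le_max_left _ _, max_le hab (min_le_left _ _)⟩
  have φ1 : ∀ s t, |φ s - φ t| ≤ |s - t| := by
    intro s t
    refine (abs_max_sub_max_le_max a (min b s) a (min b t)).trans ?_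
    simp only [sub_self, abs_zero]
    refine max_le (abs_nonneg _) ?_
    refine (abs_min_sub_min_le_max b s b t).trans ?_
    simp
  have φ2 : ∀ t ∈ Icc (a - 1) (b + 1), |t - φ t| ≤ 1 := by
    intro t ht
    simp only [hφ]
    rcases lt_or_ge t a with h | h
    · rw [min_eq_right (by linarith), max_eq_left h.le, abs_le]
      constructor <;> linarith [ht.1]
    · rcases lt_or_ge b t with h' | h'
      · rw [min_eq_left h'.le, max_eq_right hab, abs_le]
        constructor <;> linarith [ht.2]
      · rw [min_eq_right h', max_eq_right h]; simp
  have near : ∀ t, wdist S (α' t) (α (φ t)) ≤ r := by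
    intro t
    simp only [hα', hφ]
    rcases lt_or_ge t a with h | h
    · rw [if_pos h, min_eq_right (by linarith), max_eq_left h.le, wdist_comm hS]; exact hx
    · rw [if_neg (not_lt.2 h)]
      rcases lt_or_ge b t with h' | h'
      · rw [if_pos h', min_eq_left h'.le, max_eq_right hab, wdist_comm hS]; exact hy
      · rw [if_neg (not_lt.2 h'), min_eq_right h', max_eq_right h, wdist_self]; exact hr
  refine ⟨α', ⟨by linarith, fun s hs t ht => ?_⟩, ?_, ?_, hin, ?_⟩
  · obtain ⟨q1, q2⟩ := hα.2 _ (φmem s) _ (φmem t)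
    have n1 := near s
    have n2 := near t
    have t1 := wdist_triangle hS (α' s) (α (φ s)) (α' t)
    have t2 := wdist_triangle hS (α (φ s)) (α (φ t)) (α' t)
    have t3 := wdist_triangle hS (α (φ s)) (α' s) (α (φ t))
    have t4 := wdist_triangle hS (α' s) (α' t) (α (φ t))
    rw [wdist_comm hS (α (φ t))] at t2
    rw [wdist_comm hS (α (φ s)) (α' s)] at t3
    have p1 := φ1 s t
    have p2 : |s - t| ≤ |φ s - φ t| + 2 := by
      have := abs_add_three (s - φ s) (φ s - φ t) (φ t - t)
      rw [show s - φ s + (φ s - φ t) + (φ t - t) = s - t by ring, abs_sub_comm (φ t) t] at this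
      linarith [φ2 s hs, φ2 t ht]
    have hst := abs_nonneg (s - t)
    have m1 : C * |φ s - φ t| ≤ C * |s - t| := mul_le_mul_of_nonneg_left p1 (by linarith)
    have m2 : C * |s - t| ≤ (C + 2 * r + 2) * |s - t| :=
      mul_le_mul_of_nonneg_right (by linarith) hst
    have m3 : |s - t| / (C + 2 * r + 2) ≤ |s - t| / C :=
      div_le_div_of_nonneg_left hst (by linarith) (by linarith)
    have m4 : |s - t| / C ≤ |φ s - φ t| / C + 2 := by
      have e : |s - t| / C ≤ (|φ s - φ t| + 2) / C :=
        div_le_div_of_nonneg_right p2 (by linarith)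
      have e2 : (2 : ℝ) / C ≤ 2 := div_le_self (by norm_num) hC
      rw [add_div] at e
      linarith
    constructor <;> linarith
  · simp [hα']
  · simp only [hα']
    rw [if_neg (by linarith), if_pos (by linarith)]
  · intro t ht
    simp only [hα']
    rcases lt_or_ge t a with h | h
    · simp [h]
    · rcases lt_or_ge b t with hbt | hbt
      · simp [hbt, not_lt.2 h]
      · exact Or.inr (Or.inr ⟨t, ⟨h, hbt⟩, by simp [not_lt.2 h, not_lt.2 hbt]⟩)

/-- The Morse property is invariant under finite Hausdorff distance. -/
theorem IsMorse.of_bddHD (hS : Subgroup.closure S = ⊤) {A B : Set G}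
    (hA : IsMorse (wdist S) A) (hAB : BddHD (wdist S) A B) : IsMorse (wdist S) B := by
  obtain ⟨N, hN⟩ := hA
  obtain ⟨r, h1, h2⟩ := hAB
  refine ⟨fun C => N (C + 2 * r + 2) + r, ?_⟩
  intro C hC a b hab α hα ha hb t ht
  obtain ⟨x, hx, hax⟩ := h2 _ ha
  obtain ⟨y, hy, hby⟩ := h2 _ hb
  obtain ⟨α', q, e1, e2, e3, -⟩ := hα.exists_extend hS hab hax hby
  obtain ⟨z, hz, hd⟩ := hN _ q.1 (a - 1) (b + 1) (by linarith) α' q (e1 ▸ hx) (e2 ▸ hy) t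
    ⟨by linarith [ht.1], by linarith [ht.2]⟩
  rw [e3 t ht] at hd
  obtain ⟨w, hw, hd'⟩ := h1 z hz
  exact ⟨w, hw, (wdist_triangle hS _ z _).trans (by linarith)⟩

/-- A discrete path with bounded steps that stays near a geodesic `γ`, starts near a point of
`γ` before time `u` and ends near a point of `γ` after time `u`, passes near `γ u`. -/
theorem near_of_path (hS : Subgroup.closure S = ⊤) {γ : ℕ → G} (hγ : IsGeodSeq (wdist S) γ)
    {K D : ℝ} (hD : 0 ≤ D) {M : ℕ} {c : ℕ → G}
    (hstep : ∀ i < M, wdist S (c i) (c (i + 1)) ≤ D)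
    (hnear : ∀ i ≤ M, ∃ m, wdist S (c i) (γ m) ≤ K) {u : ℕ}
    (h0 : ∃ m ≤ u, wdist S (c 0) (γ m) ≤ K) (hM : ∃ m, u ≤ m ∧ wdist S (c M) (γ m) ≤ K) :
    ∃ i ≤ M, wdist S (γ u) (c i) ≤ 3 * K + D := by
  -- if `c i` is `K`-close to both sides of `γ u` along a short jump, then it is close to `γ u`
  have key : ∀ (x y : G) (m m' : ℕ), m ≤ u → u ≤ m' → wdist S x (γ m) ≤ K →
      wdist S y (γ m') ≤ K → wdist S x y ≤ D → wdist S (γ u) x ≤ 3 * K + D := by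
    intro x y m m' hm hm' h1 h2 h3
    have hm_ : (m : ℝ) ≤ u := by exact_mod_cast hm
    have hm'_ : (u : ℝ) ≤ m' := by exact_mod_cast hm'
    have e1 := hγ m m'
    have e2 := hγ m u
    rw [abs_of_nonpos (by linarith)] at e1 e2
    have t1 := wdist_triangle hS (γ m) x (γ m')
    have t2 := wdist_triangle hS x y (γ m')
    have t3 := wdist_triangle hS (γ u) (γ m) x
    rw [wdist_comm hS (γ m) x] at t1 t3
    rw [wdist_comm hS (γ u) (γ m)] at t3
    linarith
  by_cases hQ : ∃ m ≤ u, wdist S (c M) (γ m) ≤ K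
  · obtain ⟨m, hm, h1⟩ := hQ
    obtain ⟨m', hm', h2⟩ := hM
    exact ⟨M, le_rfl, key _ _ m m' hm hm' h1 h2 (by rw [wdist_self]; exact hD)⟩
  · by_contra hcon
    push Not at hcon
    have : ∀ i ≤ M, ∃ m ≤ u, wdist S (c i) (γ m) ≤ K := by
      intro i
      induction i with
      | zero => exact fun _ => h0
      | succ i ih =>
        intro hi
        obtain ⟨m, hm, h1⟩ := ih (by omega)
        obtain ⟨m', h2⟩ := hnear (i + 1) hi
        refine ⟨m', ?_, h2⟩
        by_contra hlt
        exact absurd (key _ _ m m' hm (by omega) h1 h2 (hstep i (by omega)))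
          (not_le.2 (hcon i (by omega)))
    exact hQ (this M le_rfl)

/-- A subsegment of an `N`-Morse geodesic ray is uniformly close to any quasi-geodesic joining
its endpoints. -/
theorem near_of_qg (hS : Subgroup.closure S = ⊤) {γ : ℕ → G} (hγ : IsGeodSeq (wdist S) γ)
    {N : ℝ → ℝ} (hN : MorseSet (wdist S) N (range γ)) {C a b : ℝ} (hab : a ≤ b) {α : ℝ → G}
    (hα : IsQG (wdist S) C (Icc a b) α) {s t u : ℕ} (hs : α a = γ s) (ht : α b = γ t)
    (hsu : s ≤ u) (hut : u ≤ t) :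
    ∃ τ ∈ Icc a b, wdist S (γ u) (α τ) ≤ 3 * N C + 2 * C := by
  have hC := hα.1
  have hn : ∀ τ ∈ Icc a b, ∃ m, wdist S (α τ) (γ m) ≤ N C := by
    intro τ hτ
    obtain ⟨_, ⟨m, rfl⟩, h⟩ := hN C hC a b hab α hα ⟨s, hs.symm⟩ ⟨t, ht.symm⟩ τ hτ
    exact ⟨m, h⟩
  have hK : 0 ≤ N C := by
    obtain ⟨m, h⟩ := hn a ⟨le_rfl, hab⟩
    exact (wdist_nonneg _ _).trans h
  set M := ⌈b - a⌉₊
  have hmem : ∀ i : ℕ, min (a + i) b ∈ Icc a b := fun i =>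
    ⟨le_min (by linarith [(Nat.cast_nonneg i : (0 : ℝ) ≤ i)]) hab, min_le_right _ _⟩
  obtain ⟨i, -, hi⟩ := near_of_path hS hγ (K := N C) (D := 2 * C) (by linarith) (M := M)
    (c := fun i => α (min (a + i) b)) (u := u)
    (by
      intro i _
      have h1 := (hα.2 _ (hmem i) _ (hmem (i + 1))).2
      have h2 : |min (a + i) b - min (a + (i + 1 : ℕ)) b| ≤ 1 := by
        refine (abs_min_sub_min_le_max _ _ _ _).trans ?_
        simp
      have h3 := mul_le_mul_of_nonneg_left h2 (by linarith : 0 ≤ C)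
      linarith)
    (fun i _ => hn _ (hmem i))
    ⟨s, hsu, by
      simp only [Nat.cast_zero, add_zero, min_eq_left hab, hs, wdist_self]; exact hK⟩
    ⟨t, hut, by
      have : min (a + (M : ℝ)) b = b := min_eq_right (by linarith [Nat.le_ceil (b - a)])
      simp only [this, ht, wdist_self]; exact hK⟩
  exact ⟨_, hmem i, hi⟩

/-- Let `α` be a quasi-geodesic ending on the Morse ray `γ` and whose initial point is nearest
to `γ 0`.  Then a geodesic `β` from `γ 0` to `α a` followed by `α` is a quasi-geodesic, so `β`
fellow-travels `γ`. -/
theorem near_of_nearest (hS : Subgroup.closure S = ⊤) {γ : ℕ → G}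
    (hγ : IsGeodSeq (wdist S) γ)
    {N : ℝ → ℝ} (hN : MorseSet (wdist S) N (range γ)) {C a b : ℝ} (hab : a ≤ b) {α : ℝ → G}
    (hα : IsQG (wdist S) C (Icc a b) α) {t : ℕ} (ht : α b = γ t)
    (hmin : ∀ τ ∈ Icc a b, wdist S (γ 0) (α a) ≤ wdist S (γ 0) (α τ))
    {L : ℕ} {β : ℕ → G} (hβ : IsGeodSeg (wdist S) L β) (hβ0 : β 0 = γ 0) (hβL : β L = α a)
    {u : ℕ} (hu : u ≤ L) : wdist S (β u) (γ u) ≤ 2 * N (3 * C + 2) := by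
  have hC := hα.1
  set δ : ℝ → G := fun τ => if τ < L then β ⌊τ⌋₊ else α (a + (τ - L)) with hδ
  have hL0 : (0 : ℝ) ≤ L := Nat.cast_nonneg L
  have hβd : ∀ i j, i ≤ j → j ≤ L → wdist S (β i) (β j) = (j : ℝ) - i := by
    intro i j hij hj
    have : (i : ℝ) ≤ j := by exact_mod_cast hij
    rw [hβ i (hij.trans hj) j hj, abs_of_nonpos (by linarith)]; ring
  have aux : ∀ s ∈ Icc (0 : ℝ) (L + (b - a)), ∀ τ ∈ Icc (0 : ℝ) (L + (b - a)), s ≤ τ →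
      (τ - s) / (3 * C + 2) - (3 * C + 2) ≤ wdist S (δ s) (δ τ) ∧
        wdist S (δ s) (δ τ) ≤ (3 * C + 2) * (τ - s) + (3 * C + 2) := by
    intro s hs τ hτ hst
    have f0 : 0 ≤ τ - s := by linarith
    have f1 : (τ - s) / (3 * C + 2) ≤ (τ - s) / (3 * C) :=
      div_le_div_of_nonneg_left f0 (by linarith) (by linarith)
    have f2 : (τ - s) / (3 * C) = (τ - s) / C / 3 := by rw [div_div, mul_comm]
    have f3 : (τ - s) / C ≤ τ - s := div_le_self f0 hC
    have f4 : 0 ≤ (τ - s) / C := div_nonneg f0 (by linarith)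
    have f5 : τ - s ≤ C * (τ - s) := le_mul_of_one_le_left f0 hC
    rcases lt_or_ge τ (L : ℝ) with h2 | h2
    · have h1 : s < L := by linarith
      simp only [hδ, h1, h2, if_true]
      have a1 := Nat.floor_le hs.1
      have a2 := Nat.lt_floor_add_one s
      have a3 := Nat.floor_le hτ.1
      have a4 := Nat.lt_floor_add_one τ
      have a5 : ⌊τ⌋₊ ≤ L := by
        have : (⌊τ⌋₊ : ℝ) ≤ L := by linarith
        exact_mod_cast this
      rw [hβd _ _ (Nat.floor_le_floor hst) a5]
      constructor <;> linarith
    · have hm : a + (τ - L) ∈ Icc a b := ⟨by linarith, by linarith [hτ.2]⟩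
      rcases lt_or_ge s (L : ℝ) with h1 | h1
      · simp only [hδ, h1, not_lt.2 h2, if_true, if_false]
        have a1 := Nat.floor_le hs.1
        have a2 := Nat.lt_floor_add_one s
        have a5 : ⌊s⌋₊ ≤ L := by
          have : (⌊s⌋₊ : ℝ) ≤ L := by linarith
          exact_mod_cast this
        set x := β ⌊s⌋₊
        set y := α (a + (τ - L))
        have b1 : wdist S x (α a) = (L : ℝ) - ⌊s⌋₊ := by rw [← hβL]; exact hβd _ _ a5 le_rfl
        have b2 : wdist S (γ 0) x = (⌊s⌋₊ : ℝ) := by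
          rw [← hβ0, hβd _ _ (Nat.zero_le _) a5]; simp
        have b3 : wdist S (γ 0) (α a) = (L : ℝ) := by
          rw [← hβ0, ← hβL, hβd _ _ (Nat.zero_le _) le_rfl]; simp
        have b4 := hmin _ hm
        obtain ⟨q1, q2⟩ := hα.2 a ⟨le_rfl, hab⟩ _ hm
        rw [show a - (a + (τ - L)) = -(τ - L) by ring, abs_neg, abs_of_nonneg (by linarith)]
          at q1 q2
        have t1 := wdist_triangle hS (γ 0) x y
        have t2 := wdist_triangle hS (α a) x y
        have t3 := wdist_triangle hS x (α a) y
        rw [wdist_comm hS (α a) x] at t2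
        have g1 : ((L : ℝ) - s) / C ≤ L - s := div_le_self (by linarith) hC
        have g2 : (τ - s) / C = ((L : ℝ) - s) / C + (τ - L) / C := by
          rw [← add_div]; congr 1; ring
        have g3 : C * (τ - s) = C * (L - s) + C * (τ - L) := by ring
        have g4 : (L - s) ≤ C * (L - s) := le_mul_of_one_le_left (by linarith) hC
        constructor <;> linarith
      · simp only [hδ, not_lt.2 h1, not_lt.2 h2, if_false]
        obtain ⟨q1, q2⟩ := hα.2 (a + (s - L)) ⟨by linarith, by linarith [hs.2]⟩ _ hm
        rw [show a + (s - L) - (a + (τ - L)) = -(τ - s) by ring, abs_neg, abs_of_nonneg f0]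
          at q1 q2
        constructor <;> linarith
  have hq : IsQG (wdist S) (3 * C + 2) (Icc (0 : ℝ) (L + (b - a))) δ := by
    refine ⟨by linarith, fun s hs τ hτ => ?_⟩
    rcases le_total s τ with h | h
    · rw [abs_sub_comm, abs_of_nonneg (by linarith)]; exact aux s hs τ hτ h
    · rw [wdist_comm hS, abs_of_nonneg (by linarith)]; exact aux τ hτ s hs h
  have huL : (u : ℝ) ≤ L := by exact_mod_cast hu
  have hδu : δ u = β u := by
    rcases hu.lt_or_eq with h | h
    · have : (u : ℝ) < L := by exact_mod_cast h
      simp [hδ, h]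
    · simp [hδ, h, hβL]
  have hδ0 : δ 0 = γ 0 := by
    rcases Nat.eq_zero_or_pos L with h | h
    · subst h
      simp [hδ, ← hβL, hβ0]
    · have : (0 : ℝ) < L := by exact_mod_cast h
      simp [hδ, h, hβ0]
  have hδe : δ (L + (b - a)) = γ t := by
    simp only [hδ]
    rw [if_neg (by linarith), show a + ((L : ℝ) + (b - a) - L) = b by ring, ht]
  obtain ⟨_, ⟨m, rfl⟩, h⟩ := hN _ hq.1 0 (L + (b - a)) (by linarith) δ hq ⟨0, hδ0.symm⟩
    ⟨t, hδe.symm⟩ u ⟨Nat.cast_nonneg _, by linarith⟩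
  rw [hδu] at h
  have e1 : wdist S (γ 0) (β u) = u := by
    rw [← hβ0, hβd _ _ (Nat.zero_le _) hu]; simp
  have e2 : wdist S (γ 0) (γ m) = m := by rw [hγ]; simp
  have t1 := wdist_triangle hS (γ 0) (β u) (γ m)
  have t2 := wdist_triangle hS (γ 0) (γ m) (β u)
  have t3 := wdist_triangle hS (β u) (γ m) (γ u)
  rw [wdist_comm hS (γ m) (β u)] at t2
  have : wdist S (γ m) (γ u) ≤ N (3 * C + 2) := by
    rw [hγ, abs_le]
    constructor <;> linarith
  linarith

/-- Two Morse rays with a common origin that are joined by a quasi-geodesic staying far from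
the origin fellow-travel for a long time. -/
theorem rays_close (hS : Subgroup.closure S = ⊤) {γ γ' : ℕ → G}
    (hγ : IsGeodSeq (wdist S) γ) (hγ' : IsGeodSeq (wdist S) γ') (h0 : γ 0 = γ' 0)
    {N : ℝ → ℝ} (hN : MorseSet (wdist S) N (range γ)) (hN' : MorseSet (wdist S) N (range γ'))
    {C a b : ℝ} (hab : a ≤ b) {α : ℝ → G} (hα : IsQG (wdist S) C (Icc a b) α) {t t' : ℕ}
    (ha : α a = γ t) (hb : α b = γ' t') {u : ℕ}
    (hfar : ∀ τ ∈ Icc a b, (u : ℝ) ≤ wdist S (γ 0) (α τ)) :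
    wdist S (γ u) (γ' u) ≤ 4 * N (3 * C + 2) := by
  -- the parameter `τ₀` of a point of `α` nearest to the origin
  obtain ⟨τ₀, hτ₀, hmin⟩ : ∃ τ₀ ∈ Icc a b, ∀ τ ∈ Icc a b,
      wdist S (γ 0) (α τ₀) ≤ wdist S (γ 0) (α τ) := by
    obtain ⟨x, hx, hmin⟩ := (measure fun τ => wordLength S ((γ 0)⁻¹ * α τ)).wf.has_min
      (Icc a b) ⟨a, le_rfl, hab⟩
    refine ⟨x, hx, fun τ hτ => ?_⟩
    have := hmin τ hτ
    unfold wdist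
    exact_mod_cast not_lt.1 this
  obtain ⟨β, b0, bL, hβ⟩ := exists_geodesic hS (γ 0) (α τ₀)
  set L := wordLength S ((γ 0)⁻¹ * α τ₀) with hL
  have huL : u ≤ L := by
    have := hfar τ₀ hτ₀
    unfold wdist at this
    exact_mod_cast this
  have h1 := near_of_nearest hS hγ' hN' hτ₀.2 (hα.subset (Icc_subset_Icc_left hτ₀.1)) hb
    (fun τ hτ => by rw [← h0]; exact hmin τ ⟨hτ₀.1.trans hτ.1, hτ.2⟩) hβ (b0.trans h0) bL huL
  have hrev := (hα.subset (Icc_subset_Icc_right hτ₀.2)).reverse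
  have h2 := near_of_nearest hS hγ hN (neg_le_neg hτ₀.1) hrev (t := t) (by simpa using ha)
    (fun τ hτ => by
      simp only [neg_neg]
      exact hmin _ ⟨by linarith [hτ.2], by linarith [hτ.1, hτ₀.2]⟩) hβ b0 (by simpa using bL) huL
  have := wdist_triangle hS (γ u) (β u) (γ' u)
  rw [wdist_comm hS (γ u) (β u)] at this
  linarith

end QG

/-! ### Undistorted subgroups with empty relative Morse boundary -/

section Subgroups

variable {G : Type*} [Group G] {S : Set G}

theorem lower_of_undistorted {H : Subgroup G} {T : Set H} {C : ℝ} (hC : 1 ≤ C) {h h' : H}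
    (hU : wdist T h h' ≤ C * wdist S (h : G) (h' : G) + C) :
    wdist T h h' / C - 1 ≤ wdist S (h : G) (h' : G) := by
  have hC0 : 0 < C := by linarith
  rw [sub_le_iff_le_add, div_le_iff₀ hC0]
  linarith

/-- Geodesics of an undistorted subgroup are uniform quasi-geodesics of the group. -/
theorem qg_of_undistorted {H : Subgroup G} {T : Set H} {C : ℝ} (hC : 1 ≤ C)
    (hU : ∀ h h' : H, wdist T h h' ≤ C * wdist S (h : G) (h' : G) + C ∧
      wdist S (h : G) (h' : G) ≤ C * wdist T h h' + C)
    {n : ℕ} {β : ℕ → H} (hβ : IsGeodSeg (wdist T) n β) :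
    IsQG (wdist S) (2 * C) (Icc (0 : ℝ) n) (fun t => (β ⌊t⌋₊ : G)) := by
  have hC0 : 0 < C := by linarith
  refine ⟨by linarith, fun s hs t ht => ?_⟩
  have fl : ∀ x ∈ Icc (0 : ℝ) n, ⌊x⌋₊ ≤ n := fun x hx => Nat.floor_le_of_le hx.2
  have e := hβ _ (fl s hs) _ (fl t ht)
  obtain ⟨u1, u2⟩ := hU (β ⌊s⌋₊) (β ⌊t⌋₊)
  have u3 := lower_of_undistorted hC u1
  rw [e] at u2 u3
  have a1 := Nat.floor_le hs.1
  have a2 := Nat.lt_floor_add_one s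
  have a3 := Nat.floor_le ht.1
  have a4 := Nat.lt_floor_add_one t
  have b0 : |((s - t) - ((⌊s⌋₊ : ℝ) - ⌊t⌋₊))| ≤ 1 := by
    rw [abs_le]; constructor <;> linarith
  have b1 := (abs_le.1 (abs_abs_sub_abs_le (s - t) ((⌊s⌋₊ : ℝ) - ⌊t⌋₊)))
  set k := |(⌊s⌋₊ : ℝ) - ⌊t⌋₊|
  have hst := abs_nonneg (s - t)
  have m1 : C * k ≤ C * (|s - t| + 1) := mul_le_mul_of_nonneg_left (by linarith) hC0.le
  have m2 : |s - t| / C ≤ (k + 1) / C := div_le_div_of_nonneg_right (by linarith) hC0.le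
  have m3 : (1 : ℝ) / C ≤ 1 := by rw [div_le_one hC0]; exact hC
  have m4 : |s - t| / (2 * C) ≤ |s - t| / C :=
    div_le_div_of_nonneg_left hst hC0 (by linarith)
  have m5 : 0 ≤ C * |s - t| := mul_nonneg hC0.le hst
  rw [add_div] at m2
  constructor <;> linarith

/-- A Morse subset of the group contained in an undistorted subgroup is Morse there. -/
theorem IsMorse.of_undistorted {H : Subgroup G} {T : Set H} {C : ℝ} (hC : 1 ≤ C)
    (hU : ∀ h h' : H, wdist T h h' ≤ C * wdist S (h : G) (h' : G) + C ∧
      wdist S (h : G) (h' : G) ≤ C * wdist T h h' + C)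
    {β : ℕ → H} (hβ : IsMorse (wdist S) (range fun n => (β n : G))) :
    IsMorse (wdist T) (range β) := by
  have hC0 : 0 < C := by linarith
  obtain ⟨N, hN⟩ := hβ
  refine ⟨fun C₀ => C * N (C * C₀ + C) + C, ?_⟩
  rintro C₀ hC₀ a b hab α hα ⟨i, hi⟩ ⟨j, hj⟩ t ht
  have hq : IsQG (wdist S) (C * C₀ + C) (Icc a b) (fun t => (α t : G)) := by
    have hCC : 1 ≤ C * C₀ := one_le_mul_of_one_le_of_one_le hC hC₀
    refine ⟨by linarith, fun s hs t ht => ?_⟩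
    obtain ⟨q1, q2⟩ := hα.2 s hs t ht
    obtain ⟨u1, u2⟩ := hU (α s) (α t)
    have u3 := lower_of_undistorted hC u1
    have hst := abs_nonneg (s - t)
    have m1 := mul_le_mul_of_nonneg_left q2 hC0.le
    have m2 := div_le_div_of_nonneg_right q1 hC0.le
    rw [sub_div, div_div] at m2
    have m3 : |s - t| / (C * C₀ + C) ≤ |s - t| / (C₀ * C) :=
      div_le_div_of_nonneg_left hst (by linarith) (by linarith)
    have m4 : C₀ / C ≤ C₀ := div_le_self (by linarith) hC
    have m5 : C₀ ≤ C * C₀ := le_mul_of_one_le_left (by linarith) hC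
    have m6 : 0 ≤ C * |s - t| := mul_nonneg hC0.le hst
    constructor
    · linarith
    · nlinarith
  obtain ⟨_, ⟨m, rfl⟩, h⟩ := hN _ hq.1 a b hab _ hq ⟨i, by simp [hi]⟩ ⟨j, by simp [hj]⟩ t ht
  refine ⟨β m, ⟨m, rfl⟩, (hU _ _).1.trans ?_⟩
  have := mul_le_mul_of_nonneg_left h hC0.le
  linarith

/-- A pointwise limit of longer and longer geodesic segments with common origin `1`. -/
theorem exists_limit_ray (hS : Subgroup.closure S = ⊤) (hf : S.Finite) {ℓ : ℕ → ℕ}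
    (hℓ : Tendsto ℓ atTop atTop) {β : ℕ → ℕ → G} (h0 : ∀ n, β n 0 = 1)
    (hβ : ∀ n, IsGeodSeg (wdist S) (ℓ n) (β n)) :
    ∃ δ : ℕ → G, ∀ k, ∃ n, k ≤ ℓ n ∧ ∀ i ≤ k, δ i = β n i := by
  have hev : ∀ k, ∀ᶠ n in (hyperfilter ℕ : Filter ℕ), k ≤ ℓ n := fun k =>
    (Nat.hyperfilter_le_atTop) (hℓ.eventually_ge_atTop k)
  have hval : ∀ i, ∃ g : G, ∀ᶠ n in (hyperfilter ℕ : Filter ℕ), g = β n i := by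
    intro i
    have hfin := finite_ball hS hf i
    have : ∀ᶠ n in (hyperfilter ℕ : Filter ℕ),
        ∃ g ∈ {g : G | wordLength S g ≤ i}, g = β n i := by
      filter_upwards [hev i] with n hn
      refine ⟨β n i, ?_, rfl⟩
      have := hβ n 0 (Nat.zero_le _) i hn
      rw [h0] at this
      simp only [wdist, inv_one, one_mul, Nat.cast_zero, zero_sub, abs_neg, Nat.abs_cast,
        Nat.cast_inj] at this
      exact this.le
    rw [Ultrafilter.eventually_exists_mem_iff hfin] at this
    obtain ⟨g, -, hg⟩ := this
    exact ⟨g, hg⟩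
  choose δ hδ using hval
  refine ⟨δ, fun k => ?_⟩
  have : ∀ᶠ n in (hyperfilter ℕ : Filter ℕ), ∀ i ∈ Finset.range (k + 1), δ i = β n i :=
    (Filter.eventually_all_finset _).2 fun i _ => hδ i
  obtain ⟨n, h1, h2⟩ := ((hev k).and this).exists
  exact ⟨n, h1, fun i hi => h2 i (Finset.mem_range.2 (by omega))⟩

/-- A Morse ray does not stay close to an undistorted subgroup `H` with empty relative Morse
boundary: geodesics of `H` joining `1` to points near the ray converge to a geodesic ray of `H`
at finite Hausdorff distance from the given one, hence Morse both in `H` and in `G`. -/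
theorem not_near_subgroup (hS : Subgroup.closure S = ⊤) {H : Subgroup G}
    (hU : FGUndistorted S H) (hE : RelMorseEmpty S H) {γ : ℕ → G}
    (hγ : IsGeodSeq (wdist S) γ) (h0 : γ 0 = 1) (hM : IsMorse (wdist S) (range γ)) {R : ℝ}
    (hR : ∀ n, ∃ h ∈ H, wdist S (γ n) h ≤ R) : False := by
  obtain ⟨T, hT, C, hC, hU⟩ := hU
  obtain ⟨N, hN⟩ := hM
  have hC0 : 0 < C := by linarith
  have hR0 : 0 ≤ R := by
    obtain ⟨h, -, hh⟩ := hR 0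
    exact (wdist_nonneg _ _).trans hh
  have hR' : ∀ n, ∃ h : H, wdist S (γ n) h ≤ R := fun n => by
    obtain ⟨h, hh, h1⟩ := hR n
    exact ⟨⟨h, hh⟩, h1⟩
  choose e he using hR'
  choose β β0 βe hβ using fun n => exists_geodesic hT 1 (e n)
  set ℓ : ℕ → ℕ := fun n => wordLength (T : Set H) (1⁻¹ * e n) with hℓ
  set K := N (2 * C + 2 * R + 2) with hK
  have near : ∀ n, ∀ i ≤ ℓ n, ∃ m, wdist S (β n i : G) (γ m) ≤ K := by
    intro n i hi
    have q := qg_of_undistorted hC hU (hβ n)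
    obtain ⟨α, q', e1, e2, e3, -⟩ := q.exists_extend hS (Nat.cast_nonneg _) (r := R)
      (x := γ 0) (y := γ n) (by simp [β0, h0, wdist_self, hR0])
      (by simp only [Nat.floor_natCast]; rw [βe, wdist_comm hS]; exact he n)
    have hi' : (i : ℝ) ≤ ℓ n := by exact_mod_cast hi
    have hi0 : (0 : ℝ) ≤ i := Nat.cast_nonneg i
    obtain ⟨_, ⟨m, rfl⟩, h⟩ := hN _ q'.1 _ _ (by linarith) α q' ⟨0, e1.symm⟩ ⟨n, e2.symm⟩ i
      ⟨by linarith, by linarith⟩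
    rw [e3 _ ⟨hi0, hi'⟩] at h
    simp only [Nat.floor_natCast] at h
    exact ⟨m, h⟩
  have hlim : Tendsto ℓ atTop atTop := by
    refine tendsto_atTop.2 fun k => ?_
    filter_upwards [eventually_ge_atTop ⌈C * k + C + R⌉₊] with n hn
    have h1 : C * k + C + R ≤ n := Nat.ceil_le.1 hn
    have h2 := (hU 1 (e n)).2
    have h3 : wdist S (γ 0) (γ n) = n := by rw [hγ]; simp
    have h4 := wdist_triangle hS (γ 0) (e n) (γ n)
    rw [wdist_comm hS (e n : G) (γ n), h0] at h4
    rw [h0] at h3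
    have h5 : wdist (T : Set H) 1 (e n) = ℓ n := rfl
    rw [h5] at h2
    have := he n
    simp only [Subgroup.coe_one] at h2
    have : C * k ≤ C * ℓ n := by linarith
    exact_mod_cast le_of_mul_le_mul_left this hC0
  obtain ⟨δ, hδ⟩ := exists_limit_ray hT T.finite_toSet hlim β0 hβ
  have δ0 : δ 0 = 1 := by
    obtain ⟨n, -, h⟩ := hδ 0
    rw [h 0 le_rfl, β0]
  have δgeod : IsGeodSeq (wdist (T : Set H)) δ := by
    intro i j
    obtain ⟨n, h1, h2⟩ := hδ (max i j)
    rw [h2 i (le_max_left _ _), h2 j (le_max_right _ _)]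
    exact hβ n i ((le_max_left _ _).trans h1) j ((le_max_right _ _).trans h1)
  have δnear : ∀ i, ∃ m, wdist S (δ i : G) (γ m) ≤ K := by
    intro i
    obtain ⟨n, h1, h2⟩ := hδ i
    rw [h2 i le_rfl]
    exact near n i h1
  have hK0 : 0 ≤ K := by
    obtain ⟨m, h⟩ := δnear 0
    exact (wdist_nonneg _ _).trans h
  have γnear : ∀ u, ∃ i, wdist S (γ u) (δ i) ≤ 3 * K + 2 * C := by
    intro u
    set M := ⌈(u + K + 1) * C⌉₊
    obtain ⟨i, -, hi⟩ := near_of_path hS hγ (K := K) (D := 2 * C) (by linarith) (M := M)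
      (c := fun i => (δ i : G)) (u := u)
      (by
        intro i _
        refine (hU _ _).2.trans ?_
        rw [δgeod]
        simp
        linarith)
      (fun i _ => δnear i)
      ⟨0, Nat.zero_le _, by simp [δ0, h0, wdist_self, hK0]⟩
      (by
        obtain ⟨m, hm⟩ := δnear M
        refine ⟨m, ?_, hm⟩
        have h1 : (u + K + 1) * C ≤ M := Nat.le_ceil _
        have h2 := lower_of_undistorted hC (hU (δ 0) (δ M)).1
        rw [δgeod] at h2
        simp only [Nat.cast_zero, zero_sub, abs_neg, Nat.abs_cast, δ0, Subgroup.coe_one] at h2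
        have h3 : u + K + 1 ≤ M / C := by rwa [le_div_iff₀ hC0]
        have h4 := wdist_triangle hS (1 : G) (γ m) (δ M)
        rw [wdist_comm hS (γ m)] at h4
        have h5 : wdist S (γ 0) (γ m) = m := by rw [hγ]; simp
        rw [h0] at h5
        have : (u : ℝ) ≤ m := by linarith
        exact_mod_cast this)
    exact ⟨i, hi⟩
  have hδM : IsMorse (wdist S) (range fun n => (δ n : G)) := by
    refine IsMorse.of_bddHD hS ⟨N, hN⟩ ⟨3 * K + 2 * C, ?_, ?_⟩
    · rintro _ ⟨u, rfl⟩
      obtain ⟨i, hi⟩ := γnear u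
      exact ⟨_, ⟨i, rfl⟩, hi⟩
    · rintro _ ⟨i, rfl⟩
      obtain ⟨m, hm⟩ := δnear i
      exact ⟨_, ⟨m, rfl⟩, hm.trans (by linarith)⟩
  exact hE T hT δ δgeod (IsMorse.of_undistorted hC hU hδM) hδM

end Subgroups

/-! ### Trees and their halfspaces -/

section Trees

variable {VT : Type*} {T : SimpleGraph VT}

theorem exists_adj_dist_lt (hT : T.IsTree) {v x : VT} (h : v ≠ x) :
    ∃ b, T.Adj x b ∧ v ∈ halfspace T x b := by
  obtain ⟨p, hp⟩ := hT.connected.exists_walk_length_eq_dist x v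
  cases p with
  | nil => exact absurd rfl h
  | cons hadj q =>
    rename_i b
    refine ⟨b, hadj, ?_⟩
    have := T.dist_le q
    rw [SimpleGraph.Walk.length_cons] at hp
    change T.dist v b < T.dist v x
    rw [T.dist_comm (u := v), T.dist_comm (u := v)]
    omega

/-- In a tree, a vertex has a unique neighbour closer to a given vertex. -/
theorem adj_unique (hT : T.IsTree) {v x b b' : VT} (hb : T.Adj x b) (hb' : T.Adj x b')
    (h : v ∈ halfspace T x b) (h' : v ∈ halfspace T x b') : b = b' := by
  have key : ∀ c, T.Adj x c → v ∈ halfspace T x c →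
      ∃ p : T.Walk v x, p.IsPath ∧ p.penultimate = c := by
    intro c hc hv
    have hv : T.dist v c < T.dist v x := hv
    obtain ⟨p, hp⟩ := hT.connected.exists_walk_length_eq_dist v c
    refine ⟨p.concat hc.symm, ?_, by simp⟩
    apply SimpleGraph.Walk.isPath_of_length_eq_dist
    have := T.dist_le (p.concat hc.symm)
    rw [SimpleGraph.Walk.length_concat] at *
    omega
  obtain ⟨p, hp, e⟩ := key b hb h
  obtain ⟨q, hq, e'⟩ := key b' hb' h'
  rw [← e, ← e', (hT.existsUnique_path v x).unique hp hq]

theorem mem_halfspace_or (hT : T.IsTree) {a b : VT} (h : T.Adj a b) (v : VT) :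
    v ∈ halfspace T a b ∨ v ∈ halfspace T b a := by
  have := hT.dist_ne_of_adj v h
  change T.dist v b < T.dist v a ∨ T.dist v a < T.dist v b
  omega

theorem not_mem_halfspace_symm {a b v : VT} (h : v ∈ halfspace T a b) : v ∉ halfspace T b a := by
  intro h'
  have h1 : T.dist v b < T.dist v a := h
  have h2 : T.dist v a < T.dist v b := h'
  omega

/-- The only edge separating two adjacent vertices is the edge joining them. -/
theorem eq_of_adj_of_separated (hT : T.IsTree) {a b c d : VT} (hab : T.Adj a b)
    (hcd : T.Adj c d) (hc : c ∈ halfspace T a b) (hd : d ∈ halfspace T b a) :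
    c = b ∧ d = a := by
  have c1 : T.dist c b < T.dist c a := hc
  have d1 : T.dist d a < T.dist d b := hd
  have e1 := hT.dist_eq_dist_add_one_of_adj c hab
  have e2 := hT.dist_eq_dist_add_one_of_adj d hab
  have e3 := hT.dist_eq_dist_add_one_of_adj a hcd
  have e4 := hT.dist_eq_dist_add_one_of_adj b hcd
  rw [T.dist_comm (u := a), T.dist_comm (u := a)] at e3
  rw [T.dist_comm (u := b), T.dist_comm (u := b)] at e4
  have hcb : c = b := by
    by_contra hne
    obtain ⟨c', h1, h2⟩ := exists_adj_dist_lt hT (Ne.symm hne)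
    have h2' : T.dist b c' < T.dist b c := h2
    have h3 := hT.connected.dist_triangle (u := a) (v := b) (w := c')
    have h4 : T.dist a b = 1 := T.dist_eq_one_iff_adj.2 hab
    have : c' = d := by
      refine adj_unique hT (v := a) h1 hcd ?_ ?_
      · change T.dist a c' < T.dist a c
        rw [T.dist_comm (u := a) (v := c)]
        rw [T.dist_comm (u := b) (v := c)] at h2'
        omega
      · change T.dist a d < T.dist a c
        rw [T.dist_comm (u := a), T.dist_comm (u := a)]
        omega
    subst this
    rw [T.dist_comm (u := b), T.dist_comm (u := b)] at h2'
    omega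
  refine ⟨hcb, ?_⟩
  subst hcb
  rw [T.dist_self] at *
  exact hT.connected.dist_eq_zero_iff.1 (by omega)

theorem finite_separating (hT : T.IsTree) (u v : VT) :
    {e : VT × VT | T.Adj e.1 e.2 ∧ u ∈ halfspace T e.1 e.2 ∧
      v ∈ halfspace T e.2 e.1}.Finite := by
  obtain ⟨p⟩ := hT.connected.preconnected u v
  induction p with
  | nil =>
    refine Set.finite_empty.subset ?_
    rintro e ⟨-, h1, h2⟩
    exact not_mem_halfspace_symm h1 h2
  | @cons u w v h p ih =>
    refine ((Set.finite_singleton (w, u)).union ih).subset ?_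
    rintro ⟨a, b⟩ ⟨h1, h2, h3⟩
    rcases mem_halfspace_or hT h1 w with hw | hw
    · exact Or.inr ⟨h1, hw, h3⟩
    · obtain ⟨rfl, rfl⟩ := eq_of_adj_of_separated hT h1 h h2 hw
      exact Or.inl rfl

variable {G : Type*} [Group G] [MulAction G VT]

theorem dist_smul (hadj : ∀ (g : G) (a b : VT), T.Adj a b → T.Adj (g • a) (g • b))
    (hT : T.IsTree) (g : G) (a b : VT) : T.dist (g • a) (g • b) = T.dist a b := by
  have key : ∀ (g : G) (a b : VT), T.dist (g • a) (g • b) ≤ T.dist a b := by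
    intro g a b
    obtain ⟨p, hp⟩ := hT.connected.exists_walk_length_eq_dist a b
    let f : T →g T := ⟨fun v => g • v, fun h => hadj g _ _ h⟩
    have := T.dist_le (p.map f)
    rw [SimpleGraph.Walk.length_map, hp] at this
    exact this
  refine le_antisymm (key g a b) ?_
  simpa using key g⁻¹ (g • a) (g • b)

theorem smul_mem_halfspace (hadj : ∀ (g : G) (a b : VT), T.Adj a b → T.Adj (g • a) (g • b))
    (hT : T.IsTree) (g : G) {a b v : VT} (h : v ∈ halfspace T a b) :
    g • v ∈ halfspace T (g • a) (g • b) := by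
  change T.dist _ _ < T.dist _ _
  rw [dist_smul hadj hT, dist_smul hadj hT]
  exact h

end Trees

/-! ### Places where the Cayley graph crosses an edge of the tree -/

section Crossing

variable {G : Type*} [Group G] {S : Set G} {VT : Type*} {T : SimpleGraph VT} [MulAction G VT]
  {p : VT}

/-- The oriented edges of `T` separating the base vertex `p` from `s • p` for some `s` of word
length at most one. -/
def crossEdges (S : Set G) (T : SimpleGraph VT) (p : VT) : Set (VT × VT) :=
  {e | T.Adj e.1 e.2 ∧ ∃ s : G, wordLength S s ≤ 1 ∧
    ((p ∈ halfspace T e.1 e.2 ∧ s • p ∈ halfspace T e.2 e.1) ∨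
      (p ∈ halfspace T e.2 e.1 ∧ s • p ∈ halfspace T e.1 e.2))}

/-- The set of elements `g` such that the edge `{a, b}` separates `g • p` from `h • p` for some
`h` equal or adjacent to `g` in the Cayley graph. -/
def crossSet (S : Set G) (T : SimpleGraph VT) (p a b : VT) : Set G :=
  {g | (g⁻¹ • a, g⁻¹ • b) ∈ crossEdges S T p}

theorem crossSet_symm (a b : VT) : crossSet S T p a b = crossSet S T p b a := by
  have : ∀ a b, crossSet S T p a b ⊆ crossSet S T p b a := by
    rintro a b g ⟨h, s, hs, h'⟩
    exact ⟨h.symm, s, hs, h'.symm⟩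
  exact (this a b).antisymm (this b a)

theorem finite_crossEdges (hS : Subgroup.closure S = ⊤) (hf : S.Finite) (hT : T.IsTree) :
    (crossEdges S T p).Finite := by
  refine (Set.Finite.biUnion (finite_ball hS hf 1)
    (fun s _ => (finite_separating hT p (s • p)).union (finite_separating hT (s • p) p))).subset ?_
  rintro ⟨a, b⟩ ⟨h, s, hs, h'⟩
  refine Set.mem_biUnion (x := s) hs ?_
  rcases h' with ⟨h1, h2⟩ | ⟨h1, h2⟩
  · exact Or.inl ⟨h, h1, h2⟩
  · exact Or.inr ⟨h, h2, h1⟩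

/-- A path in the Cayley graph whose image in `T` goes from one side of an edge to the other
meets the corresponding crossing set. -/
theorem exists_crossing (hadj : ∀ (g : G) (a b : VT), T.Adj a b → T.Adj (g • a) (g • b))
    (hT : T.IsTree) {a b : VT} (hab : T.Adj a b) {c : ℕ → G} {s t : ℕ} (hst : s ≤ t)
    (hc : ∀ i, s ≤ i → i < t → wdist S (c i) (c (i + 1)) ≤ 1)
    (hs : c s • p ∈ halfspace T a b) (ht : c t • p ∈ halfspace T b a) :
    ∃ i, s ≤ i ∧ i ≤ t ∧ c i ∈ crossSet S T p a b := by
  induction t, hst using Nat.le_induction with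
  | base => exact absurd ht (not_mem_halfspace_symm hs)
  | succ t hst ih =>
    rcases mem_halfspace_or hT hab (c t • p) with h | h
    · refine ⟨t, hst, Nat.le_succ _, hadj _ _ _ hab, (c t)⁻¹ * c (t + 1), ?_, Or.inl ⟨?_, ?_⟩⟩
      · have := hc t hst (Nat.lt_succ_self _)
        unfold wdist at this
        exact_mod_cast this
      · simpa using smul_mem_halfspace hadj hT (c t)⁻¹ h
      · simpa [mul_smul] using smul_mem_halfspace hadj hT (c t)⁻¹ ht
    · obtain ⟨i, h1, h2, h3⟩ := ih (fun i h1 h2 => hc i h1 (by omega)) h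
      exact ⟨i, h1, by omega, h3⟩

/-- Elements carrying one of finitely many points to `x` lie near the stabiliser of `x`. -/
theorem near_stabilizer {Ω : Type*} [MulAction G Ω] {Y : Set Ω} (hY : Y.Finite) (x : Ω) :
    ∃ R : ℝ, ∀ g : G, g⁻¹ • x ∈ Y →
      ∃ h ∈ MulAction.stabilizer G x, wdist S g h ≤ R := by
  have key : ∀ y : Ω, ∃ R : ℝ, ∀ g : G, g⁻¹ • x = y →
      ∃ h ∈ MulAction.stabilizer G x, wdist S g h ≤ R := by
    intro y
    by_cases hy : ∃ g₀ : G, g₀⁻¹ • x = y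
    · obtain ⟨g₀, rfl⟩ := hy
      refine ⟨wordLength S g₀⁻¹, fun g hg => ⟨g * g₀⁻¹, ?_, ?_⟩⟩
      · rw [MulAction.mem_stabilizer_iff, mul_smul, ← hg, smul_inv_smul]
      · rw [wdist_mul_right]
    · exact ⟨0, fun g hg => absurd ⟨g, hg⟩ hy⟩
  choose R hR using key
  obtain ⟨B, hB⟩ := (hY.image R).bddAbove
  refine ⟨B, fun g hg => ?_⟩
  obtain ⟨h, h1, h2⟩ := hR _ g rfl
  exact ⟨h, h1, h2.trans (hB ⟨_, hg, rfl⟩)⟩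

theorem crossSet_near_edgeStab (hS : Subgroup.closure S = ⊤) (hf : S.Finite) (hT : T.IsTree)
    (a b : VT) : ∃ R : ℝ, ∀ g ∈ crossSet S T p a b, ∃ h ∈ edgeStab G a b, wdist S g h ≤ R := by
  obtain ⟨R, hR⟩ := near_stabilizer (G := G) (S := S) (finite_crossEdges (p := p) hS hf hT) (a, b)
  refine ⟨R, fun g hg => ?_⟩
  obtain ⟨h, h1, h2⟩ := hR g hg
  rw [MulAction.mem_stabilizer_iff, Prod.smul_mk, Prod.mk.injEq] at h1
  exact ⟨h, ⟨h1.1, h1.2⟩, h2⟩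

theorem crossSet_near_stabilizer (hS : Subgroup.closure S = ⊤) (hf : S.Finite) (hT : T.IsTree)
    (x : VT) : ∃ R : ℝ, (∀ b, ∀ g ∈ crossSet S T p x b,
        ∃ h ∈ MulAction.stabilizer G x, wdist S g h ≤ R) ∧
      ∀ g : G, g • p = x → ∃ h ∈ MulAction.stabilizer G x, wdist S g h ≤ R := by
  obtain ⟨R, hR⟩ := near_stabilizer (G := G) (S := S)
    (((finite_crossEdges (p := p) hS hf hT).image Prod.fst).union (Set.finite_singleton p)) x
  refine ⟨R, fun b g hg => hR g (Or.inl ⟨_, hg, rfl⟩), fun g hg => hR g (Or.inr ?_)⟩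
  rw [← hg, inv_smul_smul]; rfl

/-- For fixed edges `{a, b}` and `{a', b'}`, any two elements carrying them to the same edge are
joined by a quasi-geodesic of uniform quality following a coset of the stabiliser of `{a, b}`. -/
theorem exists_coset_qg (hS : Subgroup.closure S = ⊤) {a b : VT}
    (hU : FGUndistorted S (edgeStab G a b)) (a' b' : VT) :
    ∃ C : ℝ, ∀ q q' : G, q • a = q' • a' → q • b = q' • b' →
      ∃ (x y : ℝ) (α : ℝ → G), x ≤ y ∧ IsQG (wdist S) C (Icc x y) α ∧ α x = q ∧ α y = q' ∧
        ∀ t ∈ Icc x y, (α t • a = q • a ∧ α t • b = q • b) ∨ α t = q' := by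
  by_cases hne : ∃ h : G, h • a' = a ∧ h • b' = b
  · obtain ⟨h, ha, hb⟩ := hne
    obtain ⟨A, hA, C, hC, hU⟩ := hU
    refine ⟨2 * C + 2 * wordLength S h + 2, fun q q' h1 h2 => ?_⟩
    have hw : q⁻¹ * (q' * h⁻¹) ∈ edgeStab G a b := by
      constructor
      · change (q⁻¹ * (q' * h⁻¹)) • a = a
        rw [← ha, mul_smul, mul_smul, inv_smul_smul, ← h1, inv_smul_smul, ha]
      · change (q⁻¹ * (q' * h⁻¹)) • b = b
        rw [← hb, mul_smul, mul_smul, inv_smul_smul, ← h2, inv_smul_smul, hb]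
    obtain ⟨β, b0, bn, hβ⟩ := exists_geodesic hA 1 ⟨_, hw⟩
    have hq := (qg_of_undistorted hC hU hβ).translate q
    obtain ⟨α, q1, e1, e2, -, e4⟩ := hq.exists_extend hS (Nat.cast_nonneg _)
      (r := wordLength S h) (x := q) (y := q') (by simp [b0, wdist_self])
      (by
        simp only [Nat.floor_natCast, bn]
        rw [show q * (q⁻¹ * (q' * h⁻¹)) = q' * h⁻¹ by group]
        conv_lhs => rw [show q' = q' * h⁻¹ * h by group, mul_inv_cancel_right, wdist_mul_right])
    refine ⟨_, _, α, ?_, q1, e1, e2, fun t ht => ?_⟩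
    · have : (0 : ℝ) ≤ wordLength (A : Set (edgeStab G a b)) (1⁻¹ * ⟨_, hw⟩) := Nat.cast_nonneg _
      linarith
    · rcases e4 t ht with e | e | ⟨s, -, e⟩
      · rw [e]; simp
      · exact Or.inr e
      · left
        have := (β ⌊s⌋₊).2
        rw [e, mul_smul, mul_smul]
        exact ⟨congrArg (q • ·) this.1, congrArg (q • ·) this.2⟩
  · refine ⟨0, fun q q' h1 h2 => absurd ⟨q⁻¹ * q', ?_, ?_⟩ hne⟩
    · rw [mul_smul, ← h1, inv_smul_smul]
    · rw [mul_smul, ← h2, inv_smul_smul]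

/-- Crossing sets are quasi-convex in a weak sense, uniformly over all edges: any two of their
points are joined by a uniform quasi-geodesic inside the crossing set. -/
theorem exists_crossSet_qg (hS : Subgroup.closure S = ⊤) (hf : S.Finite) (hT : T.IsTree)
    (hU : ∀ a b : VT, T.Adj a b → FGUndistorted S (edgeStab G a b)) :
    ∃ C : ℝ, ∀ a b : VT, ∀ q ∈ crossSet S T p a b, ∀ q' ∈ crossSet S T p a b,
      ∃ (x y : ℝ) (α : ℝ → G), x ≤ y ∧ IsQG (wdist S) C (Icc x y) α ∧ α x = q ∧ α y = q' ∧
        ∀ t ∈ Icc x y, α t ∈ crossSet S T p a b := by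
  have key : ∀ e : (VT × VT) × (VT × VT), ∃ C : ℝ, T.Adj e.1.1 e.1.2 → ∀ q q' : G,
      q • e.1.1 = q' • e.2.1 → q • e.1.2 = q' • e.2.2 →
      ∃ (x y : ℝ) (α : ℝ → G), x ≤ y ∧ IsQG (wdist S) C (Icc x y) α ∧ α x = q ∧ α y = q' ∧
        ∀ t ∈ Icc x y, (α t • e.1.1 = q • e.1.1 ∧ α t • e.1.2 = q • e.1.2) ∨ α t = q' := by
    intro e
    by_cases he : T.Adj e.1.1 e.1.2
    · obtain ⟨C, hC⟩ := exists_coset_qg hS (hU _ _ he) e.2.1 e.2.2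
      exact ⟨C, fun _ => hC⟩
    · exact ⟨0, fun h => absurd h he⟩
  choose C hC using key
  have hfin := finite_crossEdges (p := p) hS hf hT
  obtain ⟨B, hB⟩ := ((hfin.prod hfin).image C).bddAbove
  refine ⟨B, fun a b q hq q' hq' => ?_⟩
  obtain ⟨x, y, α, h1, h2, h3, h4, h5⟩ := hC ((q⁻¹ • a, q⁻¹ • b), (q'⁻¹ • a, q'⁻¹ • b)) hq.1 q q'
    (by simp) (by simp)
  refine ⟨x, y, α, h1, h2.mono (hB (Set.mem_image_of_mem C (Set.mk_mem_prod hq hq'))), h3, h4, fun t ht => ?_⟩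
  rcases h5 t ht with ⟨e1, e2⟩ | e
  · simp only [smul_inv_smul] at e1 e2
    change ((α t)⁻¹ • a, (α t)⁻¹ • b) ∈ crossEdges S T p
    have f1 : (α t)⁻¹ • a = q⁻¹ • a := by rw [inv_smul_eq_iff, e1]
    have f2 : (α t)⁻¹ • b = q⁻¹ • b := by rw [inv_smul_eq_iff, e2]
    rw [f1, f2]; exact hq
  · simpa only [e] using hq'

/-- Points of the crossing set of an edge far from the base vertex are long. -/
theorem crossSet_far (hS : Subgroup.closure S = ⊤) (hf : S.Finite)
    (hadj : ∀ (g : G) (a b : VT), T.Adj a b → T.Adj (g • a) (g • b)) (hT : T.IsTree) (K : ℕ) :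
    ∃ B : ℕ, ∀ a b : VT, B < T.dist p a → ∀ g ∈ crossSet S T p a b, K < wordLength S g := by
  obtain ⟨B₁, hB₁⟩ := ((finite_ball hS hf K).image fun g : G => T.dist p (g • p)).bddAbove
  obtain ⟨B₂, hB₂⟩ := ((finite_crossEdges (p := p) hS hf hT).image
    fun e => T.dist p e.1).bddAbove
  refine ⟨B₁ + B₂, fun a b hab g hg => ?_⟩
  by_contra hlt
  have h1 : T.dist p (g • p) ≤ B₁ := hB₁ ⟨g, not_lt.1 hlt, rfl⟩
  have h2 : T.dist p (g⁻¹ • a) ≤ B₂ := hB₂ ⟨_, hg, rfl⟩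
  have h3 := hT.connected.dist_triangle (u := p) (v := g • p) (w := a)
  have h4 := dist_smul hadj hT g p (g⁻¹ • a)
  rw [smul_inv_smul] at h4
  omega

end Crossing

/-! ### Morse rays and the edges of the tree -/

section Sides

variable {G : Type*} [Group G] {S : Set G} {VT : Type*} {T : SimpleGraph VT} [MulAction G VT]
  {p : VT}

theorem IsGeodSeq.step {γ : ℕ → G} (hγ : IsGeodSeq (wdist S) γ) (i : ℕ) :
    wdist S (γ i) (γ (i + 1)) ≤ 1 := by
  rw [hγ]; simp

theorem IsGeodSeq.dist_one {γ : ℕ → G} (hγ : IsGeodSeq (wdist S) γ) (h0 : γ 0 = 1) (n : ℕ) :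
    wdist S (γ n) 1 = n := by
  rw [← h0, hγ]; simp

/-- Crossing sets are quasi-convex with respect to Morse rays: the part of an `N`-Morse ray between
two points close to a crossing set stays close to it, uniformly over edges and `N`-Morse rays. -/
theorem segment_near_crossSet (hS : Subgroup.closure S = ⊤) (hf : S.Finite) (hT : T.IsTree)
    (hU : ∀ a b : VT, T.Adj a b → FGUndistorted S (edgeStab G a b)) (N : ℝ → ℝ) (r : ℝ) :
    ∃ R : ℝ, ∀ a b : VT, ∀ γ : ℕ → G, IsGeodSeq (wdist S) γ →
      MorseSet (wdist S) N (range γ) → ∀ s u t : ℕ, s ≤ u → u ≤ t →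
      InNbhd (wdist S) (crossSet S T p a b) r (γ s) →
      InNbhd (wdist S) (crossSet S T p a b) r (γ t) →
      InNbhd (wdist S) (crossSet S T p a b) R (γ u) := by
  obtain ⟨C, hC⟩ := exists_crossSet_qg (p := p) hS hf hT hU
  refine ⟨3 * N (C + 2 * r + 2) + 2 * (C + 2 * r + 2) + r,
    fun a b γ hγ hN s u t hsu hut ⟨q, hq, hsq⟩ ⟨q', hq', htq⟩ => ?_⟩
  have hr : 0 ≤ r := (wdist_nonneg _ _).trans hsq
  obtain ⟨x, y, α, hxy, hα, rfl, rfl, hin⟩ := hC a b q hq q' hq'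
  rw [wdist_comm hS] at hsq htq
  obtain ⟨α', h1, h2, h3, -, h5⟩ := hα.exists_extend hS hxy hsq htq
  obtain ⟨τ, hτ, hd⟩ := near_of_qg hS hγ hN (by linarith) h1 h2 h3 hsu hut
  rcases h5 τ hτ with e | e | ⟨σ, hσ, e⟩
  · refine ⟨α x, hq, (wdist_triangle hS _ (γ s) _).trans ?_⟩
    rw [e] at hd
    rw [wdist_comm hS] at hsq
    linarith
  · refine ⟨α y, hq', (wdist_triangle hS _ (γ t) _).trans ?_⟩
    rw [e] at hd
    rw [wdist_comm hS] at htq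
    linarith
  · refine ⟨α σ, hin σ hσ, ?_⟩
    rw [e] at hd
    linarith

/-- A Morse ray leaves every neighbourhood of a crossing set. Otherwise it would stay close to
the edge group, contradicting the emptiness of its relative Morse boundary. -/
theorem leaves_crossSet (hS : Subgroup.closure S = ⊤) (hf : S.Finite) (hT : T.IsTree)
    (hU : ∀ a b : VT, T.Adj a b → FGUndistorted S (edgeStab G a b))
    {a b : VT} (hab : T.Adj a b) (hE : RelMorseEmpty S (edgeStab G a b)) (γ : GRay G S) (r : ℝ)
    (h : ∀ n : ℕ, ∃ t ≥ n, InNbhd (wdist S) (crossSet S T p a b) r (γ.seq t)) : False := by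
  obtain ⟨N, hN⟩ := γ.morse
  obtain ⟨R, hR⟩ := segment_near_crossSet (p := p) hS hf hT hU N r
  obtain ⟨R', hR'⟩ := crossSet_near_edgeStab (p := p) hS hf hT a b
  obtain ⟨t₀, -, ht₀⟩ := h 0
  refine not_near_subgroup hS (hU a b hab) hE γ.geod γ.base γ.morse
    (R := max (t₀ : ℝ) (R + R')) fun n => ?_
  by_cases hn : t₀ ≤ n
  · obtain ⟨t, htn, ht⟩ := h n
    obtain ⟨g, hg, hd⟩ := hR a b γ.seq γ.geod hN t₀ n t hn htn ht₀ ht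
    obtain ⟨k, hk, hd'⟩ := hR' g hg
    refine ⟨k, hk, le_max_of_le_right ((wdist_triangle hS _ g _).trans ?_)⟩
    linarith
  · refine ⟨1, one_mem _, le_max_of_le_left ?_⟩
    rw [γ.geod.dist_one γ.base]
    exact_mod_cast (not_le.1 hn).le

/-- The ray `γ`, pushed to the tree by the orbit map of `p`, is eventually contained in the
halfspace of `{a, b}` containing `b`. -/
def EventuallyIn (T : SimpleGraph VT) (p : VT) (γ : GRay G S) (a b : VT) : Prop :=
  ∃ n₀ : ℕ, ∀ n ≥ n₀, γ.seq n • p ∈ halfspace T a b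

theorem EventuallyIn.not_symm {γ : GRay G S} {a b : VT} (h : EventuallyIn T p γ a b) :
    ¬ EventuallyIn T p γ b a := by
  rintro ⟨m, hm⟩
  obtain ⟨n, hn⟩ := h
  exact not_mem_halfspace_symm (hn (max n m) (le_max_left _ _)) (hm _ (le_max_right _ _))

theorem frequently_of_not_eventuallyIn (hT : T.IsTree) {a b : VT} (hab : T.Adj a b)
    {γ : GRay G S} (h : ¬ EventuallyIn T p γ a b) (n : ℕ) :
    ∃ t ≥ n, γ.seq t • p ∈ halfspace T b a := by
  by_contra hcon
  push Not at hcon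
  exact h ⟨n, fun t ht => (mem_halfspace_or hT hab _).resolve_right (hcon t ht)⟩

theorem eventuallyIn_or (hS : Subgroup.closure S = ⊤) (hf : S.Finite) (hT : T.IsTree)
    (hadj : ∀ (g : G) (a b : VT), T.Adj a b → T.Adj (g • a) (g • b))
    (hU : ∀ a b : VT, T.Adj a b → FGUndistorted S (edgeStab G a b))
    {a b : VT} (hab : T.Adj a b) (hE : RelMorseEmpty S (edgeStab G a b)) (γ : GRay G S) :
    EventuallyIn T p γ a b ∨ EventuallyIn T p γ b a := by
  by_contra! hcon
  refine leaves_crossSet (p := p) hS hf hT hU hab hE γ 0 fun n => ?_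
  obtain ⟨s, hs, h1⟩ := frequently_of_not_eventuallyIn hT hab.symm hcon.2 n
  obtain ⟨t, ht, h2⟩ := frequently_of_not_eventuallyIn hT hab hcon.1 s
  obtain ⟨i, hi, -, h3⟩ := exists_crossing hadj hT hab ht (fun i _ _ => γ.geod.step i) h1 h2
  exact ⟨i, hs.trans hi, _, h3, (wdist_self _).le⟩

/-- Rays at finite Hausdorff distance end up on the same side of every edge. -/
theorem EventuallyIn.congr (hS : Subgroup.closure S = ⊤) (hf : S.Finite) (hT : T.IsTree)
    (hadj : ∀ (g : G) (a b : VT), T.Adj a b → T.Adj (g • a) (g • b))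
    (hU : ∀ a b : VT, T.Adj a b → FGUndistorted S (edgeStab G a b))
    {a b : VT} (hab : T.Adj a b) (hE : RelMorseEmpty S (edgeStab G a b)) {γ γ' : GRay G S}
    (hrel : grayRel S γ γ') (h : EventuallyIn T p γ a b) : EventuallyIn T p γ' a b := by
  refine (eventuallyIn_or hS hf hT hadj hU hab hE γ').resolve_right fun h' => ?_
  obtain ⟨n₀, hn₀⟩ := h
  obtain ⟨n₁, hn₁⟩ := h'
  obtain ⟨r, hr, -⟩ := hrel
  refine leaves_crossSet (p := p) hS hf hT hU hab hE γ r fun n => ?_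
  refine ⟨n + n₀ + n₁ + ⌈r⌉₊, by omega, ?_⟩
  set t := n + n₀ + n₁ + ⌈r⌉₊ with ht
  obtain ⟨_, ⟨m, rfl⟩, hm⟩ := hr _ ⟨t, rfl⟩
  have hmn : n₁ ≤ m := by
    have h1 := wdist_triangle hS (γ.seq t) (γ'.seq m) 1
    rw [γ.geod.dist_one γ.base, γ'.geod.dist_one γ'.base] at h1
    have h2 := Nat.le_ceil r
    have h3 : (t : ℝ) = n + n₀ + n₁ + ⌈r⌉₊ := by rw [ht]; push_cast; ring
    have h4 : (0 : ℝ) ≤ n := Nat.cast_nonneg _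
    have h5 : (0 : ℝ) ≤ n₀ := Nat.cast_nonneg _
    have h6 : (n₁ : ℝ) ≤ m := by linarith
    exact_mod_cast h6
  obtain ⟨β, b0, b1, hβ⟩ := exists_geodesic hS (γ.seq t) (γ'.seq m)
  obtain ⟨i, -, hi, hc⟩ := exists_crossing (p := p) (c := β) hadj hT hab (Nat.zero_le _)
    (fun i _ hi => by rw [hβ i hi.le (i + 1) hi]; simp)
    (by rw [b0]; exact hn₀ t (by omega)) (by rw [b1]; exact hn₁ m hmn)
  refine ⟨β i, hc, ?_⟩
  rw [← b0, hβ 0 (Nat.zero_le _) i hi]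
  refine le_trans ?_ hm
  have : ((i : ℕ) : ℝ) ≤ wordLength S ((γ.seq t)⁻¹ * γ'.seq m) := by exact_mod_cast hi
  simpa [wdist] using this

theorem grayRel_equivalence (hS : Subgroup.closure S = ⊤) : Equivalence (grayRel (G := G) S) where
  refl γ := ⟨0, fun a ha => ⟨a, ha, (wdist_self _).le⟩, fun a ha => ⟨a, ha, (wdist_self _).le⟩⟩
  symm := fun ⟨r, h1, h2⟩ => ⟨r, h2, h1⟩
  trans := by
    rintro x y z ⟨r, h1, h2⟩ ⟨r', h1', h2'⟩
    refine ⟨r + r', fun a ha => ?_, fun c hc => ?_⟩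
    · obtain ⟨b, hb, hab⟩ := h1 a ha
      obtain ⟨c, hc, hbc⟩ := h1' b hb
      exact ⟨c, hc, (wdist_triangle hS a b c).trans (add_le_add hab hbc)⟩
    · obtain ⟨b, hb, hcb⟩ := h2' c hc
      obtain ⟨a, ha, hba⟩ := h2 b hb
      refine ⟨a, ha, (wdist_triangle hS c b a).trans ?_⟩
      linarith

theorem grayRel_of_eq (hS : Subgroup.closure S = ⊤) {γ γ' : GRay G S}
    (h : Quot.mk (grayRel S) γ = Quot.mk (grayRel S) γ') : grayRel S γ γ' :=
  (grayRel_equivalence hS).eqvGen_iff.1 (Quot.eqvGen_exact h)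

/-- The boundary points whose rays are eventually in the halfspace of `{a, b}` containing `b`. -/
def sideSet (S : Set G) (T : SimpleGraph VT) (p a b : VT) : Set (MorseBoundary G S) :=
  {ξ | ∃ γ : GRay G S, Quot.mk (grayRel S) γ = ξ ∧ EventuallyIn T p γ a b}

theorem mk_mem_sideSet (hS : Subgroup.closure S = ⊤) (hf : S.Finite) (hT : T.IsTree)
    (hadj : ∀ (g : G) (a b : VT), T.Adj a b → T.Adj (g • a) (g • b))
    (hU : ∀ a b : VT, T.Adj a b → FGUndistorted S (edgeStab G a b))
    {a b : VT} (hab : T.Adj a b) (hE : RelMorseEmpty S (edgeStab G a b)) {γ : GRay G S} :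
    (Quot.mk (grayRel S) γ : MorseBoundary G S) ∈ sideSet S T p a b ↔ EventuallyIn T p γ a b := by
  refine ⟨?_, fun h => ⟨γ, rfl, h⟩⟩
  rintro ⟨γ', h1, h2⟩
  exact h2.congr hS hf hT hadj hU hab hE (grayRel_of_eq hS h1)

theorem isOpen_cylinder (N : ℝ → ℝ) (γ : NGRays G S N) (m : ℕ) :
    IsOpen {γ' : NGRays G S N | ∀ i ≤ m, γ'.1.seq i = γ.1.seq i} := by
  let _ : TopologicalSpace G := ⊥
  have : DiscreteTopology G := ⟨rfl⟩
  refine isOpen_induced_iff.2 ⟨Set.pi (Iic m) fun i => {γ.1.seq i},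
    isOpen_set_pi (Set.finite_Iic m) fun i _ => isOpen_discrete _, ?_⟩
  ext γ'
  simp [Set.mem_pi]

/-- In the stratum of `N`-Morse rays, a ray which shares a long enough initial segment with `γ`
ends up on the same side of the edge `{a, b}`: otherwise the far part of `γ` would be squeezed
between the origin and later crossings of the edge, hence stay close to the crossing set. -/
theorem exists_cylinder (hS : Subgroup.closure S = ⊤) (hf : S.Finite) (hT : T.IsTree)
    (hadj : ∀ (g : G) (a b : VT), T.Adj a b → T.Adj (g • a) (g • b))
    (hU : ∀ a b : VT, T.Adj a b → FGUndistorted S (edgeStab G a b))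
    {a b : VT} (hab : T.Adj a b) (hE : RelMorseEmpty S (edgeStab G a b)) {N : ℝ → ℝ}
    (γ : NGRays G S N) (h : EventuallyIn T p γ.1 a b) :
    ∃ m : ℕ, ∀ γ' : NGRays G S N, (∀ i ≤ m, γ'.1.seq i = γ.1.seq i) →
      EventuallyIn T p γ'.1 a b := by
  by_contra! hcon
  obtain ⟨n₀, hn₀⟩ := h
  have key : ∀ m ≥ n₀, ∃ γ' : NGRays G S N, γ'.1.seq m = γ.1.seq m ∧
      ∃ i ≥ m, γ'.1.seq i ∈ crossSet S T p a b := by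
    intro m hm
    obtain ⟨γ', h1, h2⟩ := hcon m
    obtain ⟨t, ht, h3⟩ := frequently_of_not_eventuallyIn hT hab h2 m
    obtain ⟨i, hi, -, h4⟩ := exists_crossing hadj hT hab ht (fun i _ _ => γ'.1.geod.step i)
      (by rw [h1 m le_rfl]; exact hn₀ m hm) h3
    exact ⟨γ', h1 m le_rfl, i, hi, h4⟩
  obtain ⟨γ₀, -, i₀, -, hg₀⟩ := key n₀ le_rfl
  obtain ⟨R, hR⟩ := segment_near_crossSet (p := p) hS hf hT hU N (wdist S 1 (γ₀.1.seq i₀))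
  refine leaves_crossSet (p := p) hS hf hT hU hab hE γ.1 R fun n => ⟨n + n₀, by omega, ?_⟩
  obtain ⟨γ', h1, i, hi, h2⟩ := key (n + n₀) (by omega)
  rw [← h1]
  refine hR a b _ γ'.1.geod γ'.2 0 (n + n₀) i (Nat.zero_le _) hi ⟨_, hg₀, ?_⟩ ⟨_, h2, ?_⟩
  · rw [γ'.1.base]
  · rw [wdist_self]; exact wdist_nonneg _ _

theorem isOpen_sideSet (hS : Subgroup.closure S = ⊤) (hf : S.Finite) (hT : T.IsTree)
    (hadj : ∀ (g : G) (a b : VT), T.Adj a b → T.Adj (g • a) (g • b))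
    (hU : ∀ a b : VT, T.Adj a b → FGUndistorted S (edgeStab G a b))
    {a b : VT} (hab : T.Adj a b) (hE : RelMorseEmpty S (edgeStab G a b)) :
    IsOpen (sideSet S T p a b) := by
  refine isOpen_iSup_iff.2 fun N => isOpen_coinduced.2 (isOpen_iff_forall_mem_open.2 ?_)
  intro γ hγ
  have hγ' := (mk_mem_sideSet hS hf hT hadj hU hab hE).1 hγ
  obtain ⟨m, hm⟩ := exists_cylinder hS hf hT hadj hU hab hE γ hγ'
  exact ⟨_, fun γ' h => ⟨γ'.1, rfl, hm γ' h⟩, isOpen_cylinder N γ m, fun i _ => rfl⟩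

theorem isClopen_sideSet (hS : Subgroup.closure S = ⊤) (hf : S.Finite) (hT : T.IsTree)
    (hadj : ∀ (g : G) (a b : VT), T.Adj a b → T.Adj (g • a) (g • b))
    (hU : ∀ a b : VT, T.Adj a b → FGUndistorted S (edgeStab G a b))
    (hE : ∀ a b : VT, T.Adj a b → RelMorseEmpty S (edgeStab G a b)) {a b : VT}
    (hab : T.Adj a b) : IsClopen (sideSet S T p a b) := by
  have hc : (sideSet S T p a b)ᶜ = sideSet S T p b a := by
    ext ⟨γ⟩
    have h1 := mk_mem_sideSet (p := p) hS hf hT hadj hU hab (hE _ _ hab) (γ := γ)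
    have h2 := mk_mem_sideSet (p := p) hS hf hT hadj hU hab.symm (hE _ _ hab.symm) (γ := γ)
    refine (not_congr h1).trans (Iff.trans ⟨fun h => ?_, fun h => h.not_symm⟩ h2.symm)
    exact (eventuallyIn_or hS hf hT hadj hU hab (hE _ _ hab) γ).resolve_left h
  refine ⟨⟨?_⟩, isOpen_sideSet hS hf hT hadj hU hab (hE _ _ hab)⟩
  rw [hc]
  exact isOpen_sideSet hS hf hT hadj hU hab.symm (hE _ _ hab.symm)

end Sides

/-! ### Connected components -/

section Components

variable {G : Type*} [Group G] {S : Set G} {VT : Type*} {T : SimpleGraph VT} [MulAction G VT]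
  {p : VT}

theorem component_subset_or (hS : Subgroup.closure S = ⊤) (hf : S.Finite) (hT : T.IsTree)
    (hadj : ∀ (g : G) (a b : VT), T.Adj a b → T.Adj (g • a) (g • b))
    (hU : ∀ a b : VT, T.Adj a b → FGUndistorted S (edgeStab G a b))
    (hE : ∀ a b : VT, T.Adj a b → RelMorseEmpty S (edgeStab G a b)) {a b : VT}
    (hab : T.Adj a b) (ξ : MorseBoundary G S) :
    connectedComponent ξ ⊆ sideSet S T p a b ∨ connectedComponent ξ ⊆ sideSet S T p b a := by
  obtain ⟨γ, rfl⟩ := Quot.exists_rep ξ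
  rcases eventuallyIn_or (p := p) hS hf hT hadj hU hab (hE _ _ hab) γ with h | h
  · exact Or.inl ((isClopen_sideSet hS hf hT hadj hU hE hab).connectedComponent_subset
      ⟨γ, rfl, h⟩)
  · exact Or.inr ((isClopen_sideSet hS hf hT hadj hU hE hab.symm).connectedComponent_subset
      ⟨γ, rfl, h⟩)

/-- A Morse ray which, for every edge at the vertex `x`, ends up on the side of `x`, stays close
to the stabiliser of `x`. -/
theorem near_vertex_group (hS : Subgroup.closure S = ⊤) (hf : S.Finite) (hT : T.IsTree)
    (hadj : ∀ (g : G) (a b : VT), T.Adj a b → T.Adj (g • a) (g • b))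
    (hU : ∀ a b : VT, T.Adj a b → FGUndistorted S (edgeStab G a b)) {x : VT} (γ : GRay G S)
    (h : ∀ b, T.Adj x b → EventuallyIn T p γ b x) :
    ∃ r : ℝ, ∀ n : ℕ, ∃ k ∈ MulAction.stabilizer G x, wdist S (γ.seq n) k ≤ r := by
  -- only one neighbour of `x` can lie in the direction of `p`
  have hK : ∃ K : ℕ, ∀ b, T.Adj x b → p ∈ halfspace T x b →
      ∀ n ≥ K, γ.seq n • p ∈ halfspace T b x := by
    by_cases hp : p = x
    · refine ⟨0, fun b hb hpb => ?_⟩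
      have hpb : T.dist p b < T.dist p x := hpb
      rw [hp, T.dist_self] at hpb
      omega
    · obtain ⟨b₀, hb₀, h₀⟩ := exists_adj_dist_lt hT hp
      obtain ⟨K, hK⟩ := h b₀ hb₀
      refine ⟨K, fun b hb hpb => ?_⟩
      rw [adj_unique hT hb hb₀ hpb h₀]
      exact hK
  obtain ⟨K, hK⟩ := hK
  obtain ⟨N, hN⟩ := γ.morse
  obtain ⟨R, hR⟩ := segment_near_crossSet (p := p) hS hf hT hU N 0
  obtain ⟨R₁, h1, h2⟩ := crossSet_near_stabilizer (p := p) hS hf hT x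
  refine ⟨max (K : ℝ) (max R₁ (R + R₁)), fun n => ?_⟩
  by_cases hx : γ.seq n • p = x
  · obtain ⟨k, hk, hd⟩ := h2 _ hx
    exact ⟨k, hk, hd.trans (le_max_of_le_right (le_max_left _ _))⟩
  obtain ⟨b, hb, hnb⟩ := exists_adj_dist_lt hT hx
  rcases mem_halfspace_or hT hb p with hp | hp
  · have hn : n < K := by
      by_contra hn
      exact not_mem_halfspace_symm hnb (hK b hb hp n (not_lt.1 hn))
    refine ⟨1, one_mem _, le_max_of_le_left ?_⟩
    rw [γ.geod.dist_one γ.base]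
    exact_mod_cast hn.le
  · obtain ⟨m, hm⟩ := h b hb
    obtain ⟨i, -, hi, hci⟩ := exists_crossing (p := p) hadj hT hb.symm (Nat.zero_le n)
      (fun i _ _ => γ.geod.step i) (by rw [γ.base, one_smul]; exact hp) hnb
    obtain ⟨j, hj, -, hcj⟩ := exists_crossing (p := p) hadj hT hb (Nat.le_add_right n m)
      (fun i _ _ => γ.geod.step i) hnb (hm _ (by omega))
    rw [crossSet_symm] at hci
    obtain ⟨g, hg, hd⟩ := hR x b γ.seq γ.geod hN i n j hi hj ⟨_, hci, (wdist_self _).le⟩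
      ⟨_, hcj, (wdist_self _).le⟩
    obtain ⟨k, hk, hd'⟩ := h1 b g hg
    refine ⟨k, hk, le_max_of_le_right (le_max_of_le_right ?_)⟩
    have := wdist_triangle hS (γ.seq n) g k
    linarith

/-- Two Morse rays which both cross edges of `T` arbitrarily far away from `p` are equivalent. -/
theorem grayRel_of_far_edges (hS : Subgroup.closure S = ⊤) (hf : S.Finite) (hT : T.IsTree)
    (hadj : ∀ (g : G) (a b : VT), T.Adj a b → T.Adj (g • a) (g • b))
    (hU : ∀ a b : VT, T.Adj a b → FGUndistorted S (edgeStab G a b)) (γ γ' : GRay G S)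
    (h : ∀ n : ℕ, ∃ a b, T.Adj a b ∧ T.dist p a = n ∧ T.dist p b = n + 1 ∧
      EventuallyIn T p γ a b ∧ EventuallyIn T p γ' a b) : grayRel S γ γ' := by
  obtain ⟨N₁, hN₁⟩ := γ.morse
  obtain ⟨N₂, hN₂⟩ := γ'.morse
  obtain ⟨C, hC⟩ := exists_crossSet_qg (p := p) hS hf hT hU
  have key : ∀ u : ℕ, wdist S (γ.seq u) (γ'.seq u) ≤
      4 * max (N₁ (3 * C + 2)) (N₂ (3 * C + 2)) := by
    intro u
    obtain ⟨B, hB⟩ := crossSet_far (p := p) hS hf hadj hT u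
    obtain ⟨a, b, hab, ha, hb, ⟨m, hm⟩, ⟨m', hm'⟩⟩ := h (B + 1)
    have hp : p ∈ halfspace T b a := by
      change T.dist p a < T.dist p b
      omega
    obtain ⟨i, -, -, hi⟩ := exists_crossing (p := p) hadj hT hab.symm (Nat.zero_le m)
      (fun i _ _ => γ.geod.step i) (by rw [γ.base, one_smul]; exact hp) (hm m le_rfl)
    obtain ⟨j, -, -, hj⟩ := exists_crossing (p := p) hadj hT hab.symm (Nat.zero_le m')
      (fun i _ _ => γ'.geod.step i) (by rw [γ'.base, one_smul]; exact hp) (hm' m' le_rfl)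
    rw [crossSet_symm] at hi hj
    obtain ⟨x, y, α, hxy, hα, e1, e2, hin⟩ := hC a b _ hi _ hj
    refine rays_close hS γ.geod γ'.geod (γ.base.trans γ'.base.symm)
      (N := fun C => max (N₁ C) (N₂ C)) (hN₁.mono fun C => le_max_left _ _)
      (hN₂.mono fun C => le_max_right _ _) hxy hα e1 e2 fun τ hτ => ?_
    have := hB a b (by omega) _ (hin τ hτ)
    rw [γ.base, wdist, inv_one, one_mul]
    exact_mod_cast this.le
  refine ⟨4 * max (N₁ (3 * C + 2)) (N₂ (3 * C + 2)), ?_, ?_⟩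
  · rintro _ ⟨n, rfl⟩
    exact ⟨_, ⟨n, rfl⟩, key n⟩
  · rintro _ ⟨n, rfl⟩
    refine ⟨_, ⟨n, rfl⟩, ?_⟩
    rw [wdist_comm hS]
    exact key n

/-- Given a partial orientation `M` of the edges of a tree for which every vertex has an outgoing
edge, following outgoing edges from `p` gives edges arbitrarily far from `p`. -/
theorem exists_far_edge (hT : T.IsTree) {M : VT → VT → Prop}
    (hM : ∀ a b, M a b → ¬ M b a) (h : ∀ x, ∃ b, T.Adj x b ∧ M x b) (n : ℕ) :
    ∃ a b, T.Adj a b ∧ T.dist p a = n ∧ T.dist p b = n + 1 ∧ M a b := by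
  induction n with
  | zero =>
    obtain ⟨b, hb, hM⟩ := h p
    exact ⟨p, b, hb, T.dist_self, T.dist_eq_one_iff_adj.2 hb, hM⟩
  | succ n ih =>
    obtain ⟨a, b, hab, ha, hb, hMab⟩ := ih
    obtain ⟨c, hc, hMbc⟩ := h b
    refine ⟨b, c, hc, hb, ?_, hMbc⟩
    rcases hT.dist_eq_dist_add_one_of_adj p hc with e | e
    · have : c = a := by
        refine adj_unique hT (v := p) hc hab.symm ?_ ?_
        · change T.dist p c < T.dist p b
          omega
        · change T.dist p a < T.dist p b
          omega
      rw [this] at hMbc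
      exact absurd hMbc (hM _ _ hMab)
    · omega

/-- The stabilisers of two vertices meet in a subgroup of the stabiliser of the first edge of the
geodesic joining them. -/
theorem stabilizer_inf_le (hT : T.IsTree)
    (hadj : ∀ (g : G) (a b : VT), T.Adj a b → T.Adj (g • a) (g • b)) {x y b : VT}
    (hb : T.Adj x b) (hy : y ∈ halfspace T x b) {g : G} (hgx : g ∈ MulAction.stabilizer G x)
    (hgy : g ∈ MulAction.stabilizer G y) : g ∈ edgeStab G x b := by
  have hgx' : g • x = x := hgx
  have hgy' : g • y = y := hgy
  refine ⟨hgx, ?_⟩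
  have h1 := smul_mem_halfspace hadj hT g hy
  have h2 := hadj g _ _ hb
  rw [hgx'] at h1 h2
  rw [hgy'] at h1
  exact adj_unique hT h2 hb h1 hy

/-- A set in bounded neighbourhoods of two subgroups is in a bounded neighbourhood of their
intersection. -/
theorem near_inf (hS : Subgroup.closure S = ⊤) (hf : S.Finite) (H K : Subgroup G) (r : ℝ) :
    ∃ R : ℝ, ∀ g : G, (∃ h ∈ H, wdist S g h ≤ r) → (∃ k ∈ K, wdist S g k ≤ r) →
      ∃ l ∈ H ⊓ K, wdist S g l ≤ R := by
  -- for a fixed value `w` of `h⁻¹ * k`, one pair of representatives serves all `g`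
  have key : ∀ w : G, ∃ R : ℝ, ∀ g : G, ∀ h ∈ H, ∀ k ∈ K, h⁻¹ * k = w → wdist S g h ≤ r →
      ∃ l ∈ H ⊓ K, wdist S g l ≤ R := by
    intro w
    by_cases hw : ∃ h₀ ∈ H, ∃ k₀ ∈ K, h₀⁻¹ * k₀ = w
    · obtain ⟨h₀, hh₀, k₀, hk₀, rfl⟩ := hw
      refine ⟨r + wordLength S h₀⁻¹, fun g h hh k hk e hd => ?_⟩
      have e' : h * h₀⁻¹ = k * k₀⁻¹ := by
        have : k = h * (h₀⁻¹ * k₀) := by rw [← e]; group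
        rw [this]; group
      refine ⟨h * h₀⁻¹, ⟨H.mul_mem hh (H.inv_mem hh₀), ?_⟩, ?_⟩
      · rw [e']; exact K.mul_mem hk (K.inv_mem hk₀)
      · have := wdist_triangle hS g h (h * h₀⁻¹)
        rw [wdist_mul_right] at this
        linarith
    · exact ⟨0, fun g h hh k hk e => absurd ⟨h, hh, k, hk, e⟩ hw⟩
  choose R hR using key
  obtain ⟨B, hB⟩ := ((finite_ball hS hf ⌊2 * r⌋₊).image R).bddAbove
  refine ⟨B, fun g ⟨h, hh, hd⟩ ⟨k, hk, hd'⟩ => ?_⟩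
  obtain ⟨l, hl, hdl⟩ := hR _ g h hh k hk rfl hd
  refine ⟨l, hl, hdl.trans (hB (Set.mem_image_of_mem R ?_))⟩
  change wordLength S (h⁻¹ * k) ≤ ⌊2 * r⌋₊
  apply Nat.le_floor
  have h1 := wdist_triangle hS h g k
  rw [wdist_comm hS h g] at h1
  change wdist S h k ≤ 2 * r
  linarith

end Components

/-! ### Decomposition of the Morse boundary -/

/-- **Theorem A** (Statement 0).  Let `G` split as a graph of groups (a minimal,
non-elliptic action without inversions on a simplicial tree `T`), with all edge groups
finitely generated, undistorted in `G` and with empty relative Morse boundary.  Then every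
connected component of `∂_M G` that is not a singleton is contained in the image of the
natural injection `(∂_M V, G) ↪ ∂_M G` for some vertex group `V`, and the images of the
relative boundaries of stabilisers of distinct vertices are disjoint. -/
theorem morse_components_of_graph_of_groups
    {G VT : Type*} [Group G] [MulAction G VT]
    (S : Finset G) (hSgen : Subgroup.closure (S : Set G) = ⊤)
    (T : SimpleGraph VT) (hact : ActsOnTree G T)
    (hedge : ∀ a b : VT, T.Adj a b →
      FGUndistorted (S : Set G) (edgeStab G a b) ∧
      RelMorseEmpty (S : Set G) (edgeStab G a b)) :
    (∀ ξ : MorseBoundary G (S : Set G),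
      ¬ (connectedComponent ξ).Subsingleton →
      ∃ x : VT,
        connectedComponent ξ ⊆ relBdryImage (S : Set G) (MulAction.stabilizer G x)) ∧
    (∀ x y : VT, x ≠ y →
      relBdryImage (S : Set G) (MulAction.stabilizer G x) ∩
        relBdryImage (S : Set G) (MulAction.stabilizer G y) = ∅) := by
  have hT := hact.1
  have hadj := hact.2.1
  have hf := S.finite_toSet
  have hU := fun a b hab => (hedge a b hab).1
  have hE := fun a b hab => (hedge a b hab).2
  obtain ⟨p⟩ := hT.connected.nonempty
  constructor
  · intro ξ hξ
    by_cases hsink : ∃ x, ∀ b, T.Adj x b → connectedComponent ξ ⊆ sideSet (S : Set G) T p b x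
    · obtain ⟨x, hx⟩ := hsink
      refine ⟨x, ?_⟩
      rintro ⟨γ⟩ hγ
      refine ⟨γ, rfl, near_vertex_group (p := p) hSgen hf hT hadj hU γ fun b hb => ?_⟩
      exact (mk_mem_sideSet hSgen hf hT hadj hU hb.symm (hE _ _ hb.symm)).1 (hx b hb hγ)
    · push Not at hsink
      refine absurd ?_ hξ
      rintro ⟨γ⟩ hγ ⟨γ'⟩ hγ'
      refine Quot.sound (grayRel_of_far_edges (p := p) hSgen hf hT hadj hU γ γ' fun n => ?_)
      obtain ⟨a, b, hab, ha, hb, -, hM⟩ := exists_far_edge (p := p) hT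
        (M := fun a b => T.Adj a b ∧ connectedComponent ξ ⊆ sideSet (S : Set G) T p a b)
        (fun a b h h' => by
          have h1 := (mk_mem_sideSet hSgen hf hT hadj hU h.1 (hE _ _ h.1)).1 (h.2 hγ)
          have h2 := (mk_mem_sideSet hSgen hf hT hadj hU h'.1 (hE _ _ h'.1)).1 (h'.2 hγ)
          exact h1.not_symm h2)
        (fun x => by
          obtain ⟨b, hb, h⟩ := hsink x
          exact ⟨b, hb, hb, (component_subset_or hSgen hf hT hadj hU hE hb ξ).resolve_right h⟩) n
      have key := fun {γ : GRay G (S : Set G)} =>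
        mk_mem_sideSet (p := p) hSgen hf hT hadj hU hab (hE _ _ hab) (γ := γ)
      exact ⟨a, b, hab, ha, hb, key.1 (hM hγ), key.1 (hM hγ')⟩
  · intro x y hxy
    refine Set.eq_empty_iff_forall_notMem.2 ?_
    rintro ξ ⟨⟨γ, h1, r, hr⟩, γ', h2, r', hr'⟩
    obtain ⟨b, hb, hy⟩ := exists_adj_dist_lt hT hxy.symm
    obtain ⟨s, hs, -⟩ := grayRel_of_eq hSgen (h1.trans h2.symm)
    obtain ⟨R, hR⟩ := near_inf hSgen hf (MulAction.stabilizer G x) (MulAction.stabilizer G y)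
      (max r (s + r'))
    refine not_near_subgroup hSgen (hU x b hb) (hE x b hb) γ.geod γ.base γ.morse (R := R)
      fun n => ?_
    obtain ⟨h, hh, hd⟩ := hr n
    obtain ⟨_, ⟨m, rfl⟩, hm⟩ := hs _ ⟨n, rfl⟩
    obtain ⟨k, hk, hd'⟩ := hr' m
    obtain ⟨l, hl, hdl⟩ := hR (γ.seq n) ⟨h, hh, le_max_of_le_left hd⟩
      ⟨k, hk, le_max_of_le_right ((wdist_triangle hSgen _ _ _).trans (add_le_add hm hd'))⟩
    exact ⟨l, stabilizer_inf_le hT hadj hb hy hl.1 hl.2, hdl⟩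

end MorseGoG
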